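/- arXiv:2001.11289 — 3 statements merged into one kernel-verified Lean document; each statement's English description precedes it below -/
import Mathlib

section
/- Let K ⊆ ℝⁿ be a compact, connected set with positive Lebesgue measure satisfying Assumption 1, and let f be a real polynomial in n variables. Then there exist a constant C > 0 and r₀ ∈ ℕ such that for all r ≥ r₀, f_pfm^(r) − f_min ≤ C·(log r)²/r²·(f_max − f_min). -/
open MeasureTheory Polynomial Set

noncomputable section

/-- `Σ[t]_r`: univariate polynomials that are finite sums of squares of
polynomials of degree at most `r`. -/
def IsSOSUpTo (s : Polynomial ℝ) (r : ℕ) : Prop :=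
  ∃ (m : ℕ) (p : Fin m → Polynomial ℝ), (∀ i, (p i).natDegree ≤ r) ∧ s = ∑ i, (p i) ^ 2

/-- The push-forward bound `f_pfm^(r)` on `K` (with respect to the Lebesgue
measure restricted to `K`). -/
def pfmBound {n : ℕ} (K : Set (EuclideanSpace ℝ (Fin n)))
    (f : MvPolynomial (Fin n) ℝ) (r : ℕ) : ℝ :=
  sInf { v : ℝ | ∃ s : Polynomial ℝ, IsSOSUpTo s r ∧
    (∫ x in K, s.eval (MvPolynomial.eval (fun i => x i) f)) = 1 ∧
    v = ∫ x in K, MvPolynomial.eval (fun i => x i) f * s.eval (MvPolynomial.eval (fun i => x i) f) }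

/-- Assumption 1: there are `ε_K, η_K > 0` and `N ≥ n` such that
`vol(K ∩ B_δ(x)) ≥ η_K δ^N vol(Bⁿ)` for all `x ∈ K` and `0 < δ ≤ ε_K`. -/
def Assumption1 {n : ℕ} (K : Set (EuclideanSpace ℝ (Fin n))) : Prop :=
  ∃ εK ηK N : ℝ, 0 < εK ∧ 0 < ηK ∧ (n : ℝ) ≤ N ∧
    ∀ x ∈ K, ∀ δ : ℝ, 0 < δ → δ ≤ εK →
      ENNReal.ofReal (ηK * δ ^ N) * volume (Metric.ball (0 : EuclideanSpace ℝ (Fin n)) 1)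
        ≤ volume (K ∩ Metric.closedBall x δ)

/-!
`pfmBound K f r` is Lasserre's bound on the line for the push-forward `ν` of Lebesgue measure on `K`
under `f`. Around a minimiser of `f` on `K`, Assumption 1 and the Lipschitz continuity of `f` give
`ν [m, m + t] ≥ c * t ^ N` for small `t`, where `[m, M]` is the range of `f`. As a density take the
square of a Chebyshev polynomial of degree `r` in an affine variable mapping `[m + O(θ²), M]`
into `[-1, 1]`: it is at most `1` outside an interval of length `O(θ²)` at `m`, and at least
`cosh (r θ) ^ 2` on a shorter one. With `θ = (N + 2) * log r / r` the growth of `cosh (r θ) ^ 2`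
beats the polynomially small mass `θ ^ (2 * N)` of that interval, so the density concentrates near
`m` and its mean exceeds `m` by only `O(θ²)`.
-/

open Asymptotics Filter Metric Topology
open scoped NNReal

/-! ### Chebyshev needles -/

lemma cosh_mul_le_eval_T (r : ℕ) {θ y : ℝ} (hθ : 0 ≤ θ) (hy : Real.cosh θ ≤ y) :
    Real.cosh (r * θ) ≤ (Chebyshev.T ℝ r).eval y := by
  have one_le_y : 1 ≤ y := (Real.one_le_cosh θ).trans hy
  have θ_le : θ ≤ Real.arcosh y := by
    rw [← Real.arcosh_cosh hθ]
    exact (Real.arcosh_le_arcosh (Real.cosh_pos θ) (by linarith)).2 hy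
  calc Real.cosh (r * θ) ≤ Real.cosh (r * Real.arcosh y) := by
        rw [Real.cosh_le_cosh]
        gcongr
    _ = (Chebyshev.T ℝ r).eval y := by
        simpa [Real.cosh_arcosh one_le_y] using
          (Chebyshev.T_real_cosh (Real.arcosh y) (r : ℤ)).symm

lemma cosh_le_one_add_sq {θ : ℝ} (hθ : |θ| ≤ 1) : Real.cosh θ ≤ 1 + θ ^ 2 := by
  have sq_le_one : θ ^ 2 ≤ 1 := (sq_le_one_iff_abs_le_one θ).2 hθ
  have abs_half_sq : |θ ^ 2 / 2| = θ ^ 2 / 2 := abs_of_nonneg (by positivity)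
  have exp_sub_one_le := Real.abs_exp_sub_one_le (x := θ ^ 2 / 2) (by linarith)
  linarith [Real.cosh_le_exp_half_sq θ, le_abs_self (Real.exp (θ ^ 2 / 2) - 1)]

/-- The needle polynomial on `[0, 1]`, peaking at `0`: for `0 ≤ θ ≤ 1` its absolute value is at most
`1` on `[2θ², 1]`, while it is at least `cosh (r θ)` to the left of `θ² / 3`. -/
def needle (r : ℕ) (θ : ℝ) : ℝ[X] :=
  (Chebyshev.T ℝ r).comp (C (1 + 2 * θ ^ 2) * (1 - X))

lemma eval_needle (r : ℕ) (θ u : ℝ) :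
    (needle r θ).eval u = (Chebyshev.T ℝ r).eval ((1 + 2 * θ ^ 2) * (1 - u)) := by
  simp [needle]

lemma natDegree_needle_le (r : ℕ) (θ : ℝ) : (needle r θ).natDegree ≤ r := by
  have natDegree_linear : (C (1 + 2 * θ ^ 2) * (1 - X) : ℝ[X]).natDegree ≤ 1 := by
    compute_degree
  calc (needle r θ).natDegree ≤ (Chebyshev.T ℝ r).natDegree * _ := natDegree_comp_le
    _ ≤ r * 1 := by
        rw [Chebyshev.natDegree_T, Int.natAbs_natCast]
        gcongr
    _ = r := mul_one r

lemma sq_eval_needle_le_one (r : ℕ) {θ u : ℝ} (hu : 2 * θ ^ 2 ≤ u) (hu₁ : u ≤ 1) :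
    (needle r θ).eval u ^ 2 ≤ 1 := by
  have arg_nonneg : 0 ≤ (1 + 2 * θ ^ 2) * (1 - u) :=
    mul_nonneg (by positivity) (by linarith)
  have arg_le_one : (1 + 2 * θ ^ 2) * (1 - u) ≤ 1 :=
    calc (1 + 2 * θ ^ 2) * (1 - u) ≤ (1 + 2 * θ ^ 2) * (1 - 2 * θ ^ 2) := by gcongr
      _ ≤ 1 := by linarith [sq_nonneg (2 * θ ^ 2)]
  rw [eval_needle, sq_le_one_iff_abs_le_one]
  exact Chebyshev.abs_eval_T_real_le_one _ (by rwa [abs_of_nonneg arg_nonneg])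

lemma mul_sq_eval_needle_le (r : ℕ) {θ u : ℝ} (hu : u ∈ Icc (0 : ℝ) 1) :
    u * (needle r θ).eval u ^ 2 ≤ 2 * θ ^ 2 * (needle r θ).eval u ^ 2 + 1 := by
  rcases le_total u (2 * θ ^ 2) with u_le | le_u
  · calc u * (needle r θ).eval u ^ 2 ≤ 2 * θ ^ 2 * (needle r θ).eval u ^ 2 := by gcongr
      _ ≤ _ := by simp
  · calc u * (needle r θ).eval u ^ 2 ≤ 1 * 1 :=
          mul_le_mul hu.2 (sq_eval_needle_le_one r le_u hu.2) (sq_nonneg _) zero_le_one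
      _ ≤ _ := by
          rw [one_mul]
          exact le_add_of_nonneg_left (by positivity)

lemma cosh_mul_le_eval_needle (r : ℕ) {θ u : ℝ} (hθ : 0 ≤ θ) (hθ₁ : θ ≤ 1)
    (hu : u ≤ θ ^ 2 / 3) : Real.cosh (r * θ) ≤ (needle r θ).eval u := by
  have sq_le_one : θ ^ 2 ≤ 1 := pow_le_one₀ hθ hθ₁
  rw [eval_needle]
  refine cosh_mul_le_eval_T r hθ ?_
  calc Real.cosh θ ≤ 1 + θ ^ 2 := cosh_le_one_add_sq (by rwa [abs_of_nonneg hθ])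
    _ ≤ (1 + 2 * θ ^ 2) * (1 - θ ^ 2 / 3) := by
        nlinarith [mul_nonneg (sq_nonneg θ) (sub_nonneg.2 sq_le_one)]
    _ ≤ (1 + 2 * θ ^ 2) * (1 - u) := by gcongr

lemma exists_needle_Icc {m M θ : ℝ} (hmM : m < M) (hθ : 0 ≤ θ) (hθ₁ : θ ≤ 1) (r : ℕ) :
    ∃ p : ℝ[X], p.natDegree ≤ r ∧
      (∀ t ∈ Icc m M,
        (t - m) * p.eval t ^ 2 ≤ 2 * (M - m) * θ ^ 2 * p.eval t ^ 2 + (M - m)) ∧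
      ∀ t ≤ m + (M - m) * θ ^ 2 / 3, Real.cosh (r * θ) ^ 2 ≤ p.eval t ^ 2 := by
  have width_pos : 0 < M - m := sub_pos.2 hmM
  have eval_rescaled (t : ℝ) :
      ((needle r θ).comp (C (M - m)⁻¹ * (X - C m))).eval t =
        (needle r θ).eval ((t - m) / (M - m)) := by
    simp [div_eq_inv_mul]
  refine ⟨(needle r θ).comp (C (M - m)⁻¹ * (X - C m)), ?_, fun t ht ↦ ?_, fun t ht ↦ ?_⟩
  · have natDegree_linear : (C (M - m)⁻¹ * (X - C m)).natDegree ≤ 1 := by compute_degree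
    calc _ ≤ (needle r θ).natDegree * _ := natDegree_comp_le
      _ ≤ r * 1 := by gcongr; exact natDegree_needle_le r θ
      _ = r := mul_one r
  · rw [eval_rescaled]
    set u := (t - m) / (M - m) with hu
    have sub_eq : t - m = (M - m) * u := by rw [hu]; field_simp
    have u_mem : u ∈ Icc (0 : ℝ) 1 :=
      ⟨div_nonneg (sub_nonneg.2 ht.1) width_pos.le, by
        rw [hu, div_le_one width_pos]; linarith [ht.2]⟩
    calc (t - m) * (needle r θ).eval u ^ 2
        = (M - m) * (u * (needle r θ).eval u ^ 2) := by rw [sub_eq, mul_assoc]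
      _ ≤ (M - m) * (2 * θ ^ 2 * (needle r θ).eval u ^ 2 + 1) := by
          gcongr
          exact mul_sq_eval_needle_le r u_mem
      _ = _ := by ring
  · rw [eval_rescaled]
    have u_le : (t - m) / (M - m) ≤ θ ^ 2 / 3 := by
      rw [div_le_iff₀ width_pos]
      linarith
    exact pow_le_pow_left₀ (Real.cosh_pos _).le (cosh_mul_le_eval_needle r hθ hθ₁ u_le) 2

/-! ### Sum-of-squares bounds for a measure on the line -/

/-- Lasserre's upper bound of order `r` for the least point of the support of a measure `ν`
on `ℝ`: the infimum of the means of the probability measures whose density with respect to `ν`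
is a sum of squares of polynomials of degree at most `r`. For the push-forward of Lebesgue measure
on `K` under a polynomial, this is `pfmBound`. -/
def sosBound (ν : Measure ℝ) (r : ℕ) : ℝ :=
  sInf {v : ℝ | ∃ s : ℝ[X], IsSOSUpTo s r ∧ ∫ t, s.eval t ∂ν = 1 ∧ v = ∫ t, t * s.eval t ∂ν}

lemma IsSOSUpTo.eval_nonneg {s : ℝ[X]} {r : ℕ} (hs : IsSOSUpTo s r) (t : ℝ) : 0 ≤ s.eval t := by
  obtain ⟨k, q, -, rfl⟩ := hs
  simp only [eval_finsetSum, eval_pow]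
  positivity

lemma isSOSUpTo_C_mul_sq {a : ℝ} (ha : 0 ≤ a) {p : ℝ[X]} {r : ℕ} (hp : p.natDegree ≤ r) :
    IsSOSUpTo (C a * p ^ 2) r := by
  refine ⟨1, fun _ ↦ C √a * p, fun _ ↦ (natDegree_C_mul_le _ _).trans hp, ?_⟩
  simp [mul_pow, ← C_pow, Real.sq_sqrt ha]

section sosBound

variable {ν : Measure ℝ} [IsFiniteMeasure ν] {m M : ℝ}

lemma integrable_of_ae_mem_Icc (hν : ∀ᵐ t ∂ν, t ∈ Icc m M) {g : ℝ → ℝ} (hg : Continuous g) :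
    Integrable g ν := by
  have := hg.continuousOn.integrableOn_compact (μ := ν) (isCompact_Icc (a := m) (b := M))
  rwa [IntegrableOn, Measure.restrict_eq_self_of_ae_mem hν] at this

lemma sosBound_sub_le (hν : ∀ᵐ t ∂ν, t ∈ Icc m M) {p : ℝ[X]} {r : ℕ} (hp : p.natDegree ≤ r)
    {B : ℝ} (hpos : 0 < ∫ t, p.eval t ^ 2 ∂ν)
    (hB : ∫ t, (t - m) * p.eval t ^ 2 ∂ν ≤ B * ∫ t, p.eval t ^ 2 ∂ν) :
    sosBound ν r - m ≤ B := by
  set I := ∫ t, p.eval t ^ 2 ∂ν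
  have bddBelow : BddBelow {v : ℝ | ∃ s : ℝ[X], IsSOSUpTo s r ∧ ∫ t, s.eval t ∂ν = 1 ∧
      v = ∫ t, t * s.eval t ∂ν} := by
    refine ⟨m, ?_⟩
    rintro _ ⟨s, hs, mass_one, rfl⟩
    calc m = ∫ t, m * s.eval t ∂ν := by rw [integral_const_mul, mass_one, mul_one]
      _ ≤ ∫ t, t * s.eval t ∂ν := by
          refine integral_mono_ae (integrable_of_ae_mem_Icc hν (by fun_prop))
            (integrable_of_ae_mem_Icc hν (by fun_prop)) ?_
          filter_upwards [hν] with t ht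
          exact mul_le_mul_of_nonneg_right ht.1 (hs.eval_nonneg t)
  have sosBound_le : sosBound ν r ≤ I⁻¹ * ∫ t, t * p.eval t ^ 2 ∂ν := by
    refine csInf_le bddBelow ⟨_, isSOSUpTo_C_mul_sq (inv_nonneg.2 hpos.le) hp, ?_, ?_⟩
    · simp only [eval_mul, eval_C, eval_pow, integral_const_mul]
      exact inv_mul_cancel₀ hpos.ne'
    · simp only [eval_mul, eval_C, eval_pow, mul_left_comm _ I⁻¹, integral_const_mul]
  have integral_sub_mul : ∫ t, (t - m) * p.eval t ^ 2 ∂ν = ∫ t, t * p.eval t ^ 2 ∂ν - m * I := by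
    simp only [sub_mul]
    rw [integral_sub (integrable_of_ae_mem_Icc hν (by fun_prop))
      (integrable_of_ae_mem_Icc hν (by fun_prop)), integral_const_mul]
  calc sosBound ν r - m ≤ I⁻¹ * ∫ t, t * p.eval t ^ 2 ∂ν - m := by gcongr
    _ = (∫ t, (t - m) * p.eval t ^ 2 ∂ν) / I := by
        rw [integral_sub_mul]
        field_simp
    _ ≤ B := (div_le_iff₀ hpos).2 hB

lemma sosBound_le_of_ae_eq [NeZero ν] (hν : ∀ᵐ t ∂ν, t = m) (r : ℕ) : sosBound ν r ≤ m := by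
  have ae_mem : ∀ᵐ t ∂ν, t ∈ Icc m m := by simpa using hν
  have integral_eq_zero : ∫ t, (t - m) * (1 : ℝ[X]).eval t ^ 2 ∂ν = 0 := by
    refine integral_eq_zero_of_ae ?_
    filter_upwards [hν] with t ht
    simp [ht]
  have mass_pos : 0 < ∫ t, (1 : ℝ[X]).eval t ^ 2 ∂ν := by simp
  refine sub_nonpos.1 (sosBound_sub_le ae_mem (by simp) mass_pos ?_)
  rw [integral_eq_zero, zero_mul]

lemma sosBound_sub_le_of_measureReal_le [NeZero ν] (hν : ∀ᵐ t ∂ν, t ∈ Icc m M) (hmM : m < M)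
    {θ : ℝ} {r : ℕ} (hθ : 0 ≤ θ) (hθ₁ : θ ≤ 1)
    (hmass : ν.real univ ≤
      2 * θ ^ 2 * (Real.cosh (r * θ) ^ 2 * ν.real (Iic (m + (M - m) * θ ^ 2 / 3)))) :
    sosBound ν r - m ≤ 4 * (M - m) * θ ^ 2 := by
  have : 0 < M - m := sub_pos.2 hmM
  obtain ⟨p, natDegree_p, p_le, le_p⟩ := exists_needle_Icc hmM hθ hθ₁ r
  set I := ∫ t, p.eval t ^ 2 ∂ν
  have integrable_p : Integrable (fun t ↦ p.eval t ^ 2) ν :=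
    integrable_of_ae_mem_Icc hν (by fun_prop)
  have markov : Real.cosh (r * θ) ^ 2 * ν.real (Iic (m + (M - m) * θ ^ 2 / 3)) ≤ I :=
    calc _ ≤ Real.cosh (r * θ) ^ 2 * ν.real {t | Real.cosh (r * θ) ^ 2 ≤ p.eval t ^ 2} := by
          gcongr ?_ * ?_
          exact measureReal_mono le_p
      _ ≤ I := mul_meas_ge_le_integral_of_nonneg (.of_forall fun t ↦ sq_nonneg _) integrable_p _
  have mass_le : ν.real univ ≤ 2 * θ ^ 2 * I := hmass.trans (by gcongr)
  have mass_pos : 0 < ν.real univ := measureReal_univ_pos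
  have I_pos : 0 < I := pos_of_mul_pos_right (mass_pos.trans_le mass_le) (by positivity)
  refine sosBound_sub_le hν natDegree_p I_pos ?_
  calc ∫ t, (t - m) * p.eval t ^ 2 ∂ν
      ≤ ∫ t, (2 * (M - m) * θ ^ 2 * p.eval t ^ 2 + (M - m)) ∂ν := by
        refine integral_mono_ae (integrable_of_ae_mem_Icc hν (by fun_prop))
          (integrable_of_ae_mem_Icc hν (by fun_prop)) ?_
        filter_upwards [hν] with t ht using p_le t ht
    _ = 2 * (M - m) * θ ^ 2 * I + (M - m) * ν.real univ := by
        rw [integral_add (integrable_p.const_mul _) (integrable_const _), integral_const_mul,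
          integral_const, smul_eq_mul, mul_comm (ν.real univ)]
    _ ≤ 2 * (M - m) * θ ^ 2 * I + (M - m) * (2 * θ ^ 2 * I) := by gcongr
    _ = 4 * (M - m) * θ ^ 2 * I := by ring

end sosBound

/-! ### Choice of the needle width -/

/-- The angle `θ` of the needle of degree `r` used against a measure of growth exponent `N`.
The factor `N + 2` makes `cosh (r θ) ^ 2 ≈ r ^ (2 * N + 4)` outweigh the mass `r ^ (-2 * N)` of the
needle and the factor `θ ^ 2 ≥ r ^ (-2)`. -/
def needleAngle (N r : ℕ) : ℝ :=
  (N + 2 : ℕ) * (Real.log r / r)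

lemma needleAngle_sq (N r : ℕ) :
    needleAngle N r ^ 2 = (N + 2) ^ 2 * (Real.log r ^ 2 / r ^ 2) := by
  simp [needleAngle, mul_pow, div_pow]

lemma tendsto_needleAngle (N : ℕ) : Tendsto (needleAngle N) atTop (𝓝 0) := by
  have tendsto_log_div : Tendsto (fun x : ℝ ↦ Real.log x / x) atTop (𝓝 0) :=
    Real.isLittleO_log_id_atTop.tendsto_div_nhds_zero
  rw [← mul_zero ((N + 2 : ℕ) : ℝ)]
  exact (tendsto_log_div.comp tendsto_natCast_atTop_atTop).const_mul _

lemma inv_le_needleAngle (N : ℕ) {r : ℕ} (hr : 3 ≤ r) : (r : ℝ)⁻¹ ≤ needleAngle N r := by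
  have three_le : (3 : ℝ) ≤ r := mod_cast hr
  have one_le_log : 1 ≤ Real.log r := by
    rw [Real.le_log_iff_exp_le (by linarith)]
    linarith [Real.exp_one_lt_d9]
  calc (r : ℝ)⁻¹ = 1 * (1 / r) := by simp
    _ ≤ (N + 2 : ℕ) * (Real.log r / r) := by
        gcongr
        exact mod_cast Nat.le_add_left 1 (N + 1)

lemma pow_div_two_le_cosh_mul_needleAngle (N : ℕ) {r : ℕ} (hr : 0 < r) :
    (r : ℝ) ^ (N + 2) / 2 ≤ Real.cosh (r * needleAngle N r) := by
  have exp_eq : Real.exp (r * needleAngle N r) = (r : ℝ) ^ (N + 2) := by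
    have : (r : ℝ) * needleAngle N r = (N + 2 : ℕ) * Real.log r := by
      rw [needleAngle]
      field_simp
    rw [this, Real.exp_nat_mul, Real.exp_log (mod_cast hr)]
  rw [Real.cosh_eq, exp_eq]
  linarith [Real.exp_pos (-(r * needleAngle N r))]

lemma tendsto_sq_needleAngle_mul_cosh_sq_mul_atTop {N : ℕ} {V : ℕ → ℝ} (hV : ∀ r, 0 ≤ V r)
    (hgrowth : (fun r ↦ (needleAngle N r ^ 2) ^ N) =O[atTop] V) :
    Tendsto (fun r : ℕ ↦ needleAngle N r ^ 2 * (Real.cosh (r * needleAngle N r) ^ 2 * V r))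
      atTop atTop := by
  obtain ⟨c, c_pos, hc⟩ := hgrowth.exists_pos
  have tendsto_sq : Tendsto (fun r : ℕ ↦ (4 * c)⁻¹ * (r : ℝ) ^ 2) atTop atTop :=
    ((tendsto_pow_atTop two_ne_zero).comp tendsto_natCast_atTop_atTop).const_mul_atTop
      (by positivity)
  refine tendsto_atTop_mono' _ ?_ tendsto_sq
  filter_upwards [hc.bound, eventually_ge_atTop 3] with r growth_r three_le
  have r_pos : 0 < r := by lia
  have inv_le := inv_le_needleAngle N three_le
  have le_V : c⁻¹ * ((r : ℝ)⁻¹ ^ 2) ^ N ≤ V r := by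
    rw [inv_mul_le_iff₀ c_pos]
    calc ((r : ℝ)⁻¹ ^ 2) ^ N ≤ (needleAngle N r ^ 2) ^ N := by gcongr
      _ ≤ c * V r := by simpa [abs_of_nonneg (hV r)] using growth_r
  calc (4 * c)⁻¹ * (r : ℝ) ^ 2
      = (r : ℝ)⁻¹ ^ 2 * (((r : ℝ) ^ (N + 2) / 2) ^ 2 * (c⁻¹ * ((r : ℝ)⁻¹ ^ 2) ^ N)) := by
        rw [inv_pow, inv_pow, ← pow_mul]
        field_simp
        ring
    _ ≤ _ := by
        gcongr
        exact pow_div_two_le_cosh_mul_needleAngle N r_pos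

lemma measure_ne_zero_of_isBigO_Iic {ν : Measure ℝ} {m : ℝ} {N : ℕ}
    (hgrowth : (fun t : ℝ ↦ t ^ N) =O[𝓝[>] 0] fun t ↦ ν.real (Iic (m + t))) : ν ≠ 0 := by
  rintro rfl
  have isBigO_zero : (fun t : ℝ ↦ t ^ N) =O[𝓝[>] 0] fun _ ↦ (0 : ℝ) := by simpa using hgrowth
  have eventually_pow_eq_zero : ∀ᶠ t : ℝ in 𝓝[>] 0, t ^ N = 0 := isBigO_zero_right_iff.1 isBigO_zero
  obtain ⟨t, t_pow, t_pos⟩ := (eventually_pow_eq_zero.and self_mem_nhdsWithin).exists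
  exact pow_ne_zero N (ne_of_gt t_pos) t_pow

theorem sosBound_sub_le_log_sq_div_sq {ν : Measure ℝ} [IsFiniteMeasure ν] {m M : ℝ} {N : ℕ}
    (hν : ∀ᵐ t ∂ν, t ∈ Icc m M)
    (hgrowth : (fun t : ℝ ↦ t ^ N) =O[𝓝[>] 0] fun t ↦ ν.real (Iic (m + t))) :
    ∀ᶠ r : ℕ in atTop,
      sosBound ν r - m ≤ 4 * (N + 2) ^ 2 * Real.log r ^ 2 / r ^ 2 * (M - m) := by
  have : NeZero ν := ⟨measure_ne_zero_of_isBigO_Iic hgrowth⟩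
  have m_le_M : m ≤ M := nonempty_Icc.1 hν.exists
  rcases m_le_M.eq_or_lt with rfl | m_lt_M
  · refine .of_forall fun r ↦ ?_
    simpa using sosBound_le_of_ae_eq (by simpa using hν) r
  have : 0 < M - m := sub_pos.2 m_lt_M
  set V : ℕ → ℝ := fun r ↦ ν.real (Iic (m + (M - m) * needleAngle N r ^ 2 / 3))
  have angle_pos : ∀ᶠ r in atTop, 0 < needleAngle N r := by
    filter_upwards [eventually_ge_atTop 3] with r three_le
    exact lt_of_lt_of_le (by positivity) (inv_le_needleAngle N three_le)
  have tendsto_width :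
      Tendsto (fun r ↦ (M - m) * needleAngle N r ^ 2 / 3) atTop (𝓝[>] (0 : ℝ)) := by
    refine tendsto_nhdsWithin_iff.2 ⟨?_, ?_⟩
    · simpa using (((tendsto_needleAngle N).pow 2).const_mul (M - m)).div_const 3
    · filter_upwards [angle_pos] with r pos
      exact mem_Ioi.2 (by positivity)
  have growth_V : (fun r ↦ (needleAngle N r ^ 2) ^ N) =O[atTop] V := by
    refine .trans ?_ (hgrowth.comp_tendsto tendsto_width)
    have factor_ne_zero : ((M - m) / 3) ^ N ≠ 0 := by positivity
    refine (isBigO_self_const_mul factor_ne_zero _ _).congr_right fun r ↦ ?_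
    rw [← mul_pow, Function.comp_apply, div_mul_eq_mul_div]
  have mass_le := (tendsto_sq_needleAngle_mul_cosh_sq_mul_atTop
    (fun _ ↦ measureReal_nonneg) growth_V).eventually_ge_atTop (ν.real univ / 2)
  filter_upwards [angle_pos, (tendsto_needleAngle N).eventually_le_const one_pos, mass_le]
    with r pos le_one mass_r
  calc sosBound ν r - m ≤ 4 * (M - m) * needleAngle N r ^ 2 :=
        sosBound_sub_le_of_measureReal_le hν m_lt_M pos.le le_one (by linarith)
    _ = _ := by
        rw [needleAngle_sq]
        ring

/-! ### Push-forwards under Lipschitz functions -/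

section LipschitzOnWith

variable {α : Type*} [PseudoMetricSpace α] [MeasurableSpace α] [OpensMeasurableSpace α]
  {μ : Measure α} {K : Set α} {F : α → ℝ} {L : ℝ≥0}

lemma isBigO_map_Iic_of_lipschitzOnWith (hK : MeasurableSet K) (hμK : μ K ≠ ⊤)
    (hF : LipschitzOnWith L F K) {x₀ : α} (hx₀ : x₀ ∈ K) {N : ℕ}
    (hgrowth : (fun δ : ℝ ↦ δ ^ N) =O[𝓝[>] 0] fun δ ↦ μ.real (K ∩ closedBall x₀ δ)) :
    (fun t : ℝ ↦ t ^ N) =O[𝓝[>] 0] fun t ↦ ((μ.restrict K).map F).real (Iic (F x₀ + t)) := by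
  have aemeasurable : AEMeasurable F (μ.restrict K) := hF.continuousOn.aemeasurable hK
  have : IsFiniteMeasure (μ.restrict K) := isFiniteMeasure_restrict.2 hμK
  have slope_pos : (0 : ℝ) < L + 1 := by positivity
  have ball_subset {t : ℝ} (ht : 0 < t) :
      K ∩ closedBall x₀ (t / (L + 1)) ⊆ F ⁻¹' Iic (F x₀ + t) := by
    rintro x ⟨x_mem, hx⟩
    have dist_le : dist (F x) (F x₀) ≤ t :=
      calc dist (F x) (F x₀) ≤ L * dist x x₀ := hF.dist_le_mul x x_mem x₀ hx₀
        _ ≤ (L + 1) * (t / (L + 1)) := by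
            gcongr
            · linarith
            · exact hx
        _ = t := by field_simp
    rw [Real.dist_eq] at dist_le
    exact sub_le_iff_le_add'.1 ((le_abs_self _).trans dist_le)
  have tendsto_radius : Tendsto (fun t : ℝ ↦ t / (L + 1)) (𝓝[>] 0) (𝓝[>] 0) := by
    refine tendsto_nhdsWithin_iff.2 ⟨?_, ?_⟩
    · exact tendsto_nhdsWithin_of_tendsto_nhds (Continuous.tendsto' (by fun_prop) _ _ (by simp))
    · filter_upwards [self_mem_nhdsWithin] with t ht using div_pos ht slope_pos
  have growth_radius : (fun t : ℝ ↦ t ^ N) =O[𝓝[>] 0]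
      fun t ↦ μ.real (K ∩ closedBall x₀ (t / (L + 1))) := by
    refine .trans ?_ (hgrowth.comp_tendsto tendsto_radius)
    have factor_ne_zero : ((L + 1 : ℝ) ^ N)⁻¹ ≠ 0 := by positivity
    refine (isBigO_self_const_mul factor_ne_zero _ _).congr_right fun t ↦ ?_
    rw [Function.comp_apply, div_pow, div_eq_inv_mul]
  refine growth_radius.trans (.of_bound' ?_)
  filter_upwards [self_mem_nhdsWithin] with t ht
  rw [Real.norm_of_nonneg measureReal_nonneg, Real.norm_of_nonneg measureReal_nonneg,
    map_measureReal_apply_of_aemeasurable aemeasurable measurableSet_Iic]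
  refine ENNReal.toReal_mono (measure_ne_top _ _) ?_
  calc μ (K ∩ closedBall x₀ (t / (L + 1)))
      ≤ μ (F ⁻¹' Iic (F x₀ + t) ∩ K) :=
        measure_mono (subset_inter (ball_subset ht) inter_subset_left)
    _ ≤ μ.restrict K (F ⁻¹' Iic (F x₀ + t)) := Measure.le_restrict_apply _ _

theorem pfm_bound_convergence_rate_general [T2Space α] [IsFiniteMeasureOnCompacts μ]
    (hK : IsCompact K) (hK₀ : K.Nonempty) (hF : LipschitzOnWith L F K)
    (hgrowth : ∀ x ∈ K, ∃ N : ℕ,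
      (fun δ : ℝ ↦ δ ^ N) =O[𝓝[>] 0] fun δ ↦ μ.real (K ∩ closedBall x δ)) :
    ∃ C > (0 : ℝ), ∃ r₀ : ℕ, ∀ r : ℕ, r₀ ≤ r →
      sosBound ((μ.restrict K).map F) r - sInf (F '' K) ≤
        C * Real.log r ^ 2 / r ^ 2 * (sSup (F '' K) - sInf (F '' K)) := by
  have isCompact_image : IsCompact (F '' K) := hK.image_of_continuousOn hF.continuousOn
  obtain ⟨x₀, x₀_mem, F_x₀⟩ := isCompact_image.sInf_mem (hK₀.image F)
  obtain ⟨N, growth_x₀⟩ := hgrowth x₀ x₀_mem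
  have : IsFiniteMeasure (μ.restrict K) := isFiniteMeasure_restrict.2 hK.measure_ne_top
  have ae_mem : ∀ᵐ t ∂(μ.restrict K).map F, t ∈ Icc (sInf (F '' K)) (sSup (F '' K)) := by
    refine (ae_map_iff (hF.continuousOn.aemeasurable hK.measurableSet) measurableSet_Icc).2 ?_
    exact ae_restrict_of_forall_mem hK.measurableSet fun x hx ↦
      ⟨csInf_le isCompact_image.bddBelow (mem_image_of_mem F hx),
        le_csSup isCompact_image.bddAbove (mem_image_of_mem F hx)⟩
  have growth_map :=
    isBigO_map_Iic_of_lipschitzOnWith hK.measurableSet hK.measure_ne_top hF x₀_mem growth_x₀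
  rw [F_x₀] at growth_map
  exact ⟨4 * (N + 2) ^ 2, by positivity,
    eventually_atTop.1 (sosBound_sub_le_log_sq_div_sq ae_mem growth_map)⟩

end LipschitzOnWith

/-! ### Polynomials on Euclidean space -/

section EuclideanSpace

variable {n : ℕ} {K : Set (EuclideanSpace ℝ (Fin n))}

lemma Assumption1.exists_isBigO_volume_closedBall (hK : Assumption1 K)
    {x : EuclideanSpace ℝ (Fin n)} (hx : x ∈ K) :
    ∃ N : ℕ, (fun δ : ℝ ↦ δ ^ N) =O[𝓝[>] 0] fun δ ↦ volume.real (K ∩ closedBall x δ) := by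
  obtain ⟨ε, η, N, ε_pos, η_pos, -, hvol⟩ := hK
  set v := volume.real (ball (0 : EuclideanSpace ℝ (Fin n)) 1)
  have v_pos : 0 < v := ENNReal.toReal_pos (measure_ball_pos _ _ one_pos).ne' measure_ball_lt_top.ne
  obtain ⟨N', N_le⟩ := exists_nat_ge N
  refine ⟨N', .of_bound (η * v)⁻¹ ?_⟩
  filter_upwards [Ioc_mem_nhdsGT (lt_min ε_pos one_pos)] with δ ⟨δ_pos, δ_le⟩
  have le_volume : η * δ ^ N * v ≤ volume.real (K ∩ closedBall x δ) := by
    have volume_ne_top : volume (K ∩ closedBall x δ) ≠ ⊤ :=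
      measure_ne_top_of_subset inter_subset_right measure_closedBall_lt_top.ne
    have := ENNReal.toReal_mono volume_ne_top (hvol x hx δ δ_pos (δ_le.trans (min_le_left _ _)))
    rwa [ENNReal.toReal_mul, ENNReal.toReal_ofReal (by positivity)] at this
  have pow_le_rpow : δ ^ N' ≤ δ ^ N := by
    rw [← Real.rpow_natCast]
    exact Real.rpow_le_rpow_of_exponent_ge δ_pos (δ_le.trans (min_le_right _ _)) N_le
  rw [Real.norm_of_nonneg (by positivity), Real.norm_of_nonneg measureReal_nonneg,
    le_inv_mul_iff₀ (by positivity)]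
  calc η * v * δ ^ N' ≤ η * v * δ ^ N := by gcongr
    _ = η * δ ^ N * v := by ring
    _ ≤ _ := le_volume

lemma contDiff_eval_mvPolynomial (f : MvPolynomial (Fin n) ℝ) :
    ContDiff ℝ 1 fun x : EuclideanSpace ℝ (Fin n) ↦ MvPolynomial.eval (fun i ↦ x i) f :=
  (AnalyticOnNhd.eval_continuousLinearMap
    (EuclideanSpace.equiv (Fin n) ℝ).toContinuousLinearMap f).contDiff

lemma exists_lipschitzOnWith_eval_mvPolynomial (hK : IsCompact K) (f : MvPolynomial (Fin n) ℝ) :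
    ∃ L : ℝ≥0, LipschitzOnWith L (fun x ↦ MvPolynomial.eval (fun i ↦ x i) f) K :=
  (contDiff_eval_mvPolynomial f).locallyLipschitz.locallyLipschitzOn
    |>.exists_lipschitzOnWith_of_compact hK

lemma pfmBound_eq_sosBound (f : MvPolynomial (Fin n) ℝ) (r : ℕ) :
    pfmBound K f r =
      sosBound ((volume.restrict K).map fun x ↦ MvPolynomial.eval (fun i ↦ x i) f) r := by
  have aemeasurable : AEMeasurable (fun x : EuclideanSpace ℝ (Fin n) ↦
      MvPolynomial.eval (fun i ↦ x i) f) (volume.restrict K) :=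
    (contDiff_eval_mvPolynomial f).continuous.aemeasurable
  have integral_map_eval (s : ℝ[X]) := integral_map aemeasurable (f := fun t ↦ s.eval t)
    (by fun_prop)
  have integral_map_mul_eval (s : ℝ[X]) := integral_map aemeasurable (f := fun t ↦ t * s.eval t)
    (by fun_prop)
  simp only [pfmBound, sosBound, integral_map_eval, integral_map_mul_eval]

end EuclideanSpace

/-- Theorem 1: on a compact connected `K` of positive measure satisfying
Assumption 1, `f_pfm^(r) - f_min = O(log² r / r²) · (f_max - f_min)`. -/
theorem pfm_bound_convergence_rate {n : ℕ} (K : Set (EuclideanSpace ℝ (Fin n)))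
    (hKc : IsCompact K) (hKconn : IsConnected K) (hKpos : 0 < volume K)
    (hK1 : Assumption1 K) (f : MvPolynomial (Fin n) ℝ) :
    ∃ C > (0 : ℝ), ∃ r₀ : ℕ, ∀ r : ℕ, r₀ ≤ r →
      pfmBound K f r - sInf ((fun x => MvPolynomial.eval (fun i => x i) f) '' K) ≤
        C * (Real.log r) ^ 2 / (r : ℝ) ^ 2 *
          (sSup ((fun x => MvPolynomial.eval (fun i => x i) f) '' K) -
            sInf ((fun x => MvPolynomial.eval (fun i => x i) f) '' K)) := by
  obtain ⟨_, lipschitz⟩ := exists_lipschitzOnWith_eval_mvPolynomial hKc f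
  simpa only [pfmBound_eq_sosBound] using pfm_bound_convergence_rate_general hKc hKconn.nonempty
    lipschitz fun _ ↦ hK1.exists_isBigO_volume_closedBall
end
end

section
/- Let K = [−1, 1] ⊆ ℝ and f(x) = x (so f_min = −1). Then there exist constants c, C > 0 and r₀ ∈ ℕ such that for all r ≥ r₀, −1 + c/r² ≤ f^(r) ≤ −1 + C/r². -/
open MeasureTheory Polynomial Set

noncomputable section

/-- The Lasserre upper bound `f^(r)` for a univariate polynomial `f` on
`K = [-1,1]`, with respect to the Lebesgue measure restricted to `[-1,1]`. -/
def lasserreBound1 (f : Polynomial ℝ) (r : ℕ) : ℝ :=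
  sInf { v : ℝ | ∃ σ : Polynomial ℝ, IsSOSUpTo σ r ∧
    (∫ x in Icc (-1 : ℝ) 1, σ.eval x) = 1 ∧
    v = ∫ x in Icc (-1 : ℝ) 1, f.eval x * σ.eval x }

/-! Markov's inequality, applied to the antiderivative of a polynomial density of degree `d`, bounds
the density near an endpoint of the interval by `O(d²)` times its total mass. Hence half of the mass
lies at distance at least a constant times `1 / d²` from the endpoint, which is the lower bound. For
the upper bound, the density `((1 - x) U_n(x)²)⁴` decays like `(x + 1)⁻⁴` away from `-1`, and the
same inequality, read backwards, bounds its mass from below through its value at `-1`. -/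

section Antiderivative

theorem exists_derivative_eq {K : Type*} [Field K] [CharZero K] (p : K[X]) :
    ∃ P : K[X], derivative P = p ∧ P.natDegree ≤ p.natDegree + 1 := by
  refine ⟨p.sum fun i c ↦ monomial (i + 1) (c / (i + 1)), ?_, ?_⟩
  · have hterm (i : ℕ) (c : K) : derivative (monomial (i + 1) (c / (i + 1))) = monomial i c := by
      rw [derivative_monomial, Nat.add_sub_cancel, Nat.cast_succ,
        div_mul_cancel₀ _ (Nat.cast_add_one_ne_zero i)]
    simp only [Polynomial.sum, derivative_sum, hterm]
    exact p.sum_monomial_eq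
  · refine natDegree_sum_le_of_forall_le _ _ fun i hi ↦ (natDegree_monomial_le _).trans ?_
    exact Nat.succ_le_succ (le_natDegree_of_mem_supp i hi)

theorem integral_eval_derivative (P : ℝ[X]) (a b : ℝ) :
    ∫ x in a..b, (derivative P).eval x = P.eval b - P.eval a :=
  intervalIntegral.integral_eq_sub_of_hasDerivAt (fun x _ ↦ P.hasDerivAt x)
    ((derivative P).continuous.intervalIntegrable _ _)

end Antiderivative

section EndpointInequalities

variable {P σ : ℝ[X]} {a b M : ℝ} {n : ℕ}

/- Markov's inequality at an endpoint: pulled back to `[-1, 1]`, the Chebyshev polynomial `T_n` has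
the largest derivative at `1`, and `T_n'(1) = n²`. -/
theorem eval_derivative_left_le_of_abs_le (hab : a < b) (hdeg : P.natDegree ≤ n)
    (hP : ∀ x ∈ Icc a b, |P.eval x| ≤ M) :
    (derivative P).eval a ≤ 2 * n ^ 2 / (b - a) * M := by
  rcases ((abs_nonneg _).trans (hP a (left_mem_Icc.2 hab.le))).eq_or_lt with rfl | hM
  · have hroots : Icc a b ⊆ {x | P.IsRoot x} := fun x hx ↦ abs_nonpos_iff.1 (hP x hx)
    simp [P.eq_zero_of_infinite_isRoot ((Icc_infinite hab).mono hroots)]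
  set L : ℝ[X] := C ((a + b) / 2) - C ((b - a) / 2) * X with hL
  set Q : ℝ[X] := C (-M⁻¹) * P.comp L with hQ
  have hQdeg : Q.degree ≤ n := by
    refine natDegree_le_iff_degree_le.1 ((natDegree_C_mul_le _ _).trans ?_)
    have hLdeg : L.natDegree ≤ 1 := by rw [hL]; compute_degree
    exact natDegree_comp_le.trans ((Nat.mul_le_mul hdeg hLdeg).trans_eq (mul_one n))
  have hQbound : ∀ x ∈ Icc (-1 : ℝ) 1, |Q.eval x| ≤ 1 := fun x hx ↦ by
    have hmem : L.eval x ∈ Icc a b := by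
      simp only [hL, eval_sub, eval_mul, eval_C, eval_X]
      constructor <;> nlinarith [hx.1, hx.2]
    rw [hQ, eval_mul, eval_C, eval_comp, abs_mul, abs_neg, abs_inv, abs_of_pos hM,
      inv_mul_le_one₀ hM]
    exact hP _ hmem
  have hderiv : (derivative Q).eval 1 = M⁻¹ * ((b - a) / 2) * (derivative P).eval a := by
    have hL1 : L.eval 1 = a := by
      simp only [hL, eval_sub, eval_mul, eval_C, eval_X]
      ring
    have hL' : derivative L = -C ((b - a) / 2) := by simp [hL]
    rw [hQ, derivative_C_mul, derivative_comp, hL', eval_mul, eval_mul, eval_comp, hL1, eval_C,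
      eval_neg, eval_C]
    ring
  have hmarkov := Chebyshev.eval_iterate_derivative_le_of_forall_abs_le_one (k := 1) le_rfl hQdeg
    hQbound
  have hT : (derivative (Chebyshev.T ℝ n)).eval 1 = n ^ 2 := by
    simp [Chebyshev.T_derivative_eq_U, sq]
  rw [Function.iterate_one, hderiv, hT] at hmarkov
  have hba : 0 < b - a := sub_pos.2 hab
  field_simp at hmarkov ⊢
  linarith

theorem eval_left_le_integral (hab : a < b) (hdeg : σ.natDegree ≤ n)
    (hσ : ∀ x ∈ Icc a b, 0 ≤ σ.eval x) :
    σ.eval a ≤ (n + 1) ^ 2 / (b - a) * ∫ x in a..b, σ.eval x := by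
  obtain ⟨F, rfl, hF⟩ := exists_derivative_eq σ
  set I : ℝ := F.eval b - F.eval a
  have hmono : MonotoneOn F.eval (Icc a b) :=
    monotoneOn_of_deriv_nonneg (convex_Icc a b) F.continuousOn F.differentiable.differentiableOn
      fun x hx ↦ F.deriv ▸ hσ x (interior_subset hx)
  have hbound : ∀ x ∈ Icc a b, |(F - C (F.eval a + I / 2)).eval x| ≤ I / 2 := fun x hx ↦ by
    have hleft := hmono (left_mem_Icc.2 hab.le) hx hx.1
    have hright := hmono hx (right_mem_Icc.2 hab.le) hx.2
    rw [eval_sub, eval_C, abs_le]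
    constructor <;> linarith
  have hFdeg : (F - C (F.eval a + I / 2)).natDegree ≤ n + 1 := by
    rw [natDegree_sub_C]
    omega
  have hmarkov := eval_derivative_left_le_of_abs_le hab hFdeg hbound
  rw [derivative_sub, derivative_C, sub_zero] at hmarkov
  rw [integral_eval_derivative]
  refine hmarkov.trans_eq ?_
  push_cast
  ring

theorem eval_le_integral_of_mem_left_half (hab : a < b) (hdeg : σ.natDegree ≤ n)
    (hσ : ∀ x ∈ Icc a b, 0 ≤ σ.eval x) {x : ℝ} (hx : x ∈ Icc a ((a + b) / 2)) :
    σ.eval x ≤ 2 * (n + 1) ^ 2 / (b - a) * ∫ y in a..b, σ.eval y := by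
  have hba : 0 < b - a := sub_pos.2 hab
  have hxb : (b - a) / 2 ≤ b - x := by linarith [hx.2]
  have hσx : ∀ y ∈ Icc x b, 0 ≤ σ.eval y := fun y hy ↦ hσ y (Icc_subset_Icc_left hx.1 hy)
  have hI : 0 ≤ ∫ y in x..b, σ.eval y :=
    intervalIntegral.integral_nonneg (by linarith) hσx
  have hsub : ∫ y in x..b, σ.eval y ≤ ∫ y in a..b, σ.eval y := by
    refine intervalIntegral.integral_mono_interval hx.1 (by linarith) le_rfl ?_
      (σ.continuous.intervalIntegrable _ _)
    exact ae_restrict_of_forall_mem measurableSet_Ioc fun y hy ↦ hσ y (Ioc_subset_Icc_self hy)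
  calc σ.eval x ≤ (n + 1) ^ 2 / (b - x) * ∫ y in x..b, σ.eval y :=
        eval_left_le_integral (by linarith) hdeg hσx
    _ ≤ (n + 1) ^ 2 / ((b - a) / 2) * ∫ y in a..b, σ.eval y := by gcongr
    _ = 2 * (n + 1) ^ 2 / (b - a) * ∫ y in a..b, σ.eval y := by field_simp

/- The density bound makes `[a, a + δ]` carry at most half of the mass for
`δ = (b - a) / (4 (n + 1)²)`; the other half contributes at least `δ / 2` to the moment. -/
theorem le_integral_sub_left_mul (hab : a < b) (hdeg : σ.natDegree ≤ n)
    (hσ : ∀ x ∈ Icc a b, 0 ≤ σ.eval x) :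
    (b - a) / (8 * (n + 1) ^ 2) * ∫ x in a..b, σ.eval x ≤ ∫ x in a..b, (x - a) * σ.eval x := by
  have hba : 0 < b - a := sub_pos.2 hab
  set I := ∫ x in a..b, σ.eval x
  set δ : ℝ := (b - a) / (4 * (n + 1) ^ 2) with hδ
  have hδ0 : 0 < δ := by positivity
  have hδ_half : a + δ ≤ (a + b) / 2 := by
    have : δ ≤ (b - a) / 2 := by
      rw [hδ]
      gcongr
      nlinarith [n.cast_nonneg (α := ℝ)]
    linarith
  have hintσ (u v : ℝ) : IntervalIntegrable (fun x ↦ σ.eval x) volume u v :=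
    σ.continuous.intervalIntegrable u v
  have hintxσ (u v : ℝ) : IntervalIntegrable (fun x ↦ (x - a) * σ.eval x) volume u v :=
    ((continuous_id.sub continuous_const).mul σ.continuous).intervalIntegrable u v
  have hnear : ∫ x in a..a + δ, σ.eval x ≤ I / 2 := by
    calc ∫ x in a..a + δ, σ.eval x
        ≤ ∫ _ in a..a + δ, 2 * (n + 1) ^ 2 / (b - a) * I :=
          intervalIntegral.integral_mono_on (by linarith) (hintσ _ _) (by simp) fun x hx ↦
            eval_le_integral_of_mem_left_half hab hdeg hσ ⟨hx.1, hx.2.trans hδ_half⟩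
      _ = I / 2 := by
          rw [intervalIntegral.integral_const, smul_eq_mul, add_sub_cancel_left, hδ]
          field_simp
          norm_num
  have hfar : I / 2 ≤ ∫ x in a + δ..b, σ.eval x := by
    have := intervalIntegral.integral_add_adjacent_intervals (hintσ a (a + δ)) (hintσ (a + δ) b)
    linarith
  calc (b - a) / (8 * (n + 1) ^ 2) * I = δ * (I / 2) := by
        rw [hδ]
        field_simp
        ring
    _ ≤ δ * ∫ x in a + δ..b, σ.eval x := by gcongr
    _ = ∫ x in a + δ..b, δ * σ.eval x := (intervalIntegral.integral_const_mul _ _).symm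
    _ ≤ ∫ x in a + δ..b, (x - a) * σ.eval x :=
        intervalIntegral.integral_mono_on (by linarith) ((hintσ _ _).const_mul δ) (hintxσ _ _)
          fun x hx ↦ mul_le_mul_of_nonneg_right (by linarith [hx.1])
            (hσ x ⟨by linarith [hx.1], hx.2⟩)
    _ ≤ ∫ x in a..b, (x - a) * σ.eval x := by
        refine intervalIntegral.integral_mono_interval (by linarith) (by linarith) le_rfl ?_
          (hintxσ _ _)
        exact ae_restrict_of_forall_mem measurableSet_Ioc fun x hx ↦
          mul_nonneg (sub_nonneg.2 hx.1.le) (hσ x (Ioc_subset_Icc_self hx))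

end EndpointInequalities

section ChebyshevU

theorem abs_eval_U_real_le (n : ℕ) {x : ℝ} (hx : |x| ≤ 1) : |(Chebyshev.U ℝ n).eval x| ≤ n + 1 := by
  have hT := Chebyshev.abs_iterate_derivative_T_real_le (n + 1) 1 hx
  have hn : (0 : ℝ) < n + 1 := by positivity
  simp only [Function.iterate_one, Chebyshev.T_derivative_eq_U, add_sub_cancel_right, eval_mul,
    Chebyshev.U_eval_one, Int.cast_add, Int.cast_natCast, Int.cast_one, eval_add, eval_natCast,
    eval_one, abs_mul, abs_of_pos hn] at hT
  exact le_of_mul_le_mul_left hT hn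

theorem one_sub_sq_mul_eval_U_real_sq_le_one (n : ℤ) (x : ℝ) :
    (1 - x ^ 2) * (Chebyshev.U ℝ n).eval x ^ 2 ≤ 1 := by
  rcases le_total |x| 1 with hx | hx
  · obtain ⟨hx₁, hx₂⟩ := abs_le.1 hx
    obtain ⟨θ, rfl⟩ : ∃ θ, Real.cos θ = x := ⟨_, Real.cos_arccos hx₁ hx₂⟩
    rw [← Real.sin_sq, mul_comm, ← mul_pow, Chebyshev.U_real_cos]
    exact Real.sin_sq_le_one _
  · have hsq : 1 - x ^ 2 ≤ 0 := sub_nonpos.2 ((one_le_sq_iff_one_le_abs x).2 hx)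
    exact (mul_nonpos_of_nonpos_of_nonneg hsq (sq_nonneg _)).trans zero_le_one

end ChebyshevU

theorem integral_inv_sq_le {a b c : ℝ} (hab : a ≤ b) (hc : 0 < c) :
    ∫ x in a..b, ((c + (x - a)) ^ 2)⁻¹ ≤ c⁻¹ := by
  have hpos : ∀ x ∈ uIcc a b, 0 < c + (x - a) := fun x hx ↦ by
    rw [uIcc_of_le hab] at hx
    linarith [hx.1]
  have hderiv : ∀ x ∈ uIcc a b,
      HasDerivAt (fun x ↦ -(c + (x - a))⁻¹) ((c + (x - a)) ^ 2)⁻¹ x := fun x hx ↦ by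
    have hlin : HasDerivAt (fun x ↦ c + (x - a)) 1 x :=
      ((hasDerivAt_id' x).sub_const a).const_add c
    simpa only [neg_div, neg_neg, one_div] using (hlin.fun_inv (hpos x hx).ne').fun_neg
  have hcont : ContinuousOn (fun x ↦ ((c + (x - a)) ^ 2)⁻¹) (uIcc a b) :=
    ContinuousOn.inv₀ (by fun_prop) fun x hx ↦ pow_ne_zero 2 (hpos x hx).ne'
  rw [intervalIntegral.integral_eq_sub_of_hasDerivAt hderiv hcont.intervalIntegrable, sub_self,
    add_zero]
  linarith [inv_pos.2 (hpos b right_mem_uIcc)]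

/-- The kernel `(1 - x) U_n(x)²`, nonnegative on `[-1, 1]`: it peaks at `-1` with value `2 (n + 1)²`
and is at most `1 / (x + 1)`, so its powers concentrate within distance `O(1 / n²)` of `-1`. -/
def endpointKernel (n : ℕ) : ℝ[X] := (1 - X) * Chebyshev.U ℝ n ^ 2

namespace endpointKernel

variable {x : ℝ}

theorem natDegree_le (n : ℕ) : (endpointKernel n).natDegree ≤ 2 * n + 1 := by
  have hlin : (1 - X : ℝ[X]).natDegree ≤ 1 := by compute_degree
  have hU : (Chebyshev.U ℝ n ^ 2).natDegree ≤ 2 * n := by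
    rw [natDegree_pow, Chebyshev.natDegree_U_natCast]
  exact natDegree_mul_le.trans (by omega)

theorem eval_eq (n : ℕ) (x : ℝ) :
    (endpointKernel n).eval x = (1 - x) * (Chebyshev.U ℝ n).eval x ^ 2 := by
  simp [endpointKernel]

theorem eval_neg_one (n : ℕ) : (endpointKernel n).eval (-1) = 2 * (n + 1) ^ 2 := by
  rw [eval_eq, Chebyshev.U_eval_neg_one, mul_pow, Int.cast_natCast,
    Int.cast_negOnePow_natCast, ← pow_mul, mul_comm n, pow_mul]
  norm_num

theorem eval_nonneg (n : ℕ) (hx : x ≤ 1) : 0 ≤ (endpointKernel n).eval x := by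
  rw [eval_eq]
  exact mul_nonneg (sub_nonneg.2 hx) (sq_nonneg _)

theorem eval_le (n : ℕ) (hx : x ∈ Icc (-1 : ℝ) 1) :
    (endpointKernel n).eval x ≤ 2 * (n + 1) ^ 2 := by
  have hU := sq_le_sq' (abs_le.1 (abs_eval_U_real_le n (abs_le.2 hx))).1
    (abs_le.1 (abs_eval_U_real_le n (abs_le.2 hx))).2
  rw [eval_eq]
  exact mul_le_mul (by linarith [hx.1]) hU (sq_nonneg _) zero_le_two

theorem add_one_mul_eval_le_one (n : ℕ) (x : ℝ) :
    (x + 1) * (endpointKernel n).eval x ≤ 1 := by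
  calc (x + 1) * (endpointKernel n).eval x
      = (1 - x ^ 2) * (Chebyshev.U ℝ n).eval x ^ 2 := by rw [eval_eq]; ring
    _ ≤ 1 := one_sub_sq_mul_eval_U_real_sq_le_one n x

theorem sq_eval_le (n : ℕ) (hx : x ∈ Icc (-1 : ℝ) 1) :
    (endpointKernel n).eval x ^ 2 ≤ 4 * (((2 * (n + 1 : ℝ) ^ 2)⁻¹ + (x - -1)) ^ 2)⁻¹ := by
  set q := (endpointKernel n).eval x
  set c : ℝ := (2 * (n + 1) ^ 2)⁻¹ with hc
  have : 0 < c := by positivity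
  have hx1 : 0 ≤ x - -1 := by linarith [hx.1]
  have hq0 : 0 ≤ q := eval_nonneg n hx.2
  have hqc : q * c ≤ 1 := by
    rw [hc, ← div_eq_mul_inv, div_le_one (by positivity)]
    exact eval_le n hx
  have hq : q * (c + (x - -1)) ≤ 2 := by linarith [add_one_mul_eval_le_one n x]
  rw [← div_eq_mul_inv, le_div_iff₀ (by positivity), ← mul_pow]
  calc (q * (c + (x - -1))) ^ 2 ≤ 2 ^ 2 := by gcongr
    _ = 4 := by norm_num

theorem integral_sq_le (n : ℕ) :
    ∫ x in (-1 : ℝ)..1, (endpointKernel n).eval x ^ 2 ≤ 8 * (n + 1) ^ 2 := by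
  set c : ℝ := (2 * (n + 1) ^ 2)⁻¹ with hc
  have hc0 : 0 < c := by positivity
  have hcont : ContinuousOn (fun x : ℝ ↦ 4 * ((c + (x - -1)) ^ 2)⁻¹) (Icc (-1) 1) := by
    refine continuousOn_const.mul (ContinuousOn.inv₀ (by fun_prop) fun x hx ↦ ?_)
    exact pow_ne_zero 2 (by linarith [hx.1])
  calc ∫ x in (-1 : ℝ)..1, (endpointKernel n).eval x ^ 2
      ≤ ∫ x in (-1 : ℝ)..1, 4 * ((c + (x - -1)) ^ 2)⁻¹ :=
        intervalIntegral.integral_mono_on (by norm_num)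
          (((endpointKernel n).continuous.pow 2).intervalIntegrable _ _)
          (hcont.intervalIntegrable_of_Icc (by norm_num)) fun x hx ↦ sq_eval_le n hx
    _ = 4 * ∫ x in (-1 : ℝ)..1, ((c + (x - -1)) ^ 2)⁻¹ := intervalIntegral.integral_const_mul _ _
    _ ≤ 4 * c⁻¹ := by gcongr; exact integral_inv_sq_le (by norm_num) hc0
    _ = 8 * (n + 1) ^ 2 := by rw [hc, inv_inv]; ring

theorem integral_add_one_mul_pow_four_le (n : ℕ) :
    ∫ x in (-1 : ℝ)..1, (x + 1) * (endpointKernel n ^ 4).eval x ≤ 16 * (n + 1) ^ 4 := by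
  calc ∫ x in (-1 : ℝ)..1, (x + 1) * (endpointKernel n ^ 4).eval x
      ≤ ∫ x in (-1 : ℝ)..1, 2 * (n + 1) ^ 2 * (endpointKernel n).eval x ^ 2 := by
        refine intervalIntegral.integral_mono_on (by norm_num)
          (Continuous.intervalIntegrable (by fun_prop) _ _)
          (Continuous.intervalIntegrable (by fun_prop) _ _) fun x hx ↦ ?_
        have hq0 := eval_nonneg n hx.2
        rw [eval_pow]
        calc (x + 1) * (endpointKernel n).eval x ^ 4
            = (x + 1) * (endpointKernel n).eval x * (endpointKernel n).eval x
              * (endpointKernel n).eval x ^ 2 := by ring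
          _ ≤ 1 * (2 * (n + 1) ^ 2) * (endpointKernel n).eval x ^ 2 := by
              gcongr
              exacts [add_one_mul_eval_le_one n x, eval_le n hx]
          _ = 2 * (n + 1) ^ 2 * (endpointKernel n).eval x ^ 2 := by rw [one_mul]
    _ = 2 * (n + 1) ^ 2 * ∫ x in (-1 : ℝ)..1, (endpointKernel n).eval x ^ 2 :=
        intervalIntegral.integral_const_mul _ _
    _ ≤ 2 * (n + 1) ^ 2 * (8 * (n + 1) ^ 2) := by gcongr; exact integral_sq_le n
    _ = 16 * (n + 1) ^ 4 := by ring

/- A nonnegative polynomial of degree `O(n)` cannot be large at `-1` without having mass nearby. -/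
theorem le_integral_pow_four (n : ℕ) :
    (n + 1) ^ 6 / 2 ≤ ∫ x in (-1 : ℝ)..1, (endpointKernel n ^ 4).eval x := by
  have hdeg : (endpointKernel n ^ 4).natDegree ≤ 8 * n + 4 := by
    have := natDegree_le n
    rw [natDegree_pow]
    omega
  have hnonneg : ∀ x ∈ Icc (-1 : ℝ) 1, 0 ≤ (endpointKernel n ^ 4).eval x := fun x _ ↦ by
    rw [eval_pow]
    positivity
  set I := ∫ x in (-1 : ℝ)..1, (endpointKernel n ^ 4).eval x
  have hI : 0 ≤ I := intervalIntegral.integral_nonneg (by norm_num) hnonneg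
  have hpeak : 16 * (n + 1 : ℝ) ^ 8 ≤ 32 * (n + 1) ^ 2 * I := by
    calc 16 * (n + 1 : ℝ) ^ 8 = (endpointKernel n ^ 4).eval (-1) := by
          rw [eval_pow, eval_neg_one]
          ring
      _ ≤ ((8 * n + 4 : ℕ) + 1) ^ 2 / (1 - -1) * I :=
          eval_left_le_integral (by norm_num) hdeg hnonneg
      _ ≤ (8 * (n + 1)) ^ 2 / (1 - -1) * I := by
          push_cast
          gcongr
          linarith
      _ = 32 * (n + 1) ^ 2 * I := by ring
  refine le_of_mul_le_mul_left ?_ (by positivity : (0 : ℝ) < 32 * (n + 1) ^ 2)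
  linarith

theorem integral_add_one_mul_pow_four_le_mul (n : ℕ) :
    ∫ x in (-1 : ℝ)..1, (x + 1) * (endpointKernel n ^ 4).eval x ≤
      32 / (n + 1) ^ 2 * ∫ x in (-1 : ℝ)..1, (endpointKernel n ^ 4).eval x := by
  calc ∫ x in (-1 : ℝ)..1, (x + 1) * (endpointKernel n ^ 4).eval x
      ≤ 16 * (n + 1) ^ 4 := integral_add_one_mul_pow_four_le n
    _ = 32 / (n + 1) ^ 2 * ((n + 1) ^ 6 / 2) := by field_simp; norm_num
    _ ≤ 32 / (n + 1) ^ 2 * ∫ x in (-1 : ℝ)..1, (endpointKernel n ^ 4).eval x := by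
        gcongr
        exact le_integral_pow_four n

end endpointKernel

section LasserreBound

variable {f σ : ℝ[X]} {r : ℕ}

theorem IsSOSUpTo.eval_nonneg_s3 (hσ : IsSOSUpTo σ r) (x : ℝ) : 0 ≤ σ.eval x := by
  obtain ⟨m, p, -, rfl⟩ := hσ
  simp only [eval_finsetSum, eval_pow]
  exact Finset.sum_nonneg fun i _ ↦ sq_nonneg _

theorem IsSOSUpTo.natDegree_le (hσ : IsSOSUpTo σ r) : σ.natDegree ≤ 2 * r := by
  obtain ⟨m, p, hp, rfl⟩ := hσ
  refine natDegree_sum_le_of_forall_le _ _ fun i _ ↦ ?_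
  rw [natDegree_pow]
  exact Nat.mul_le_mul_left 2 (hp i)

theorem IsSOSUpTo.C_mul {c : ℝ} (hc : 0 ≤ c) (hσ : IsSOSUpTo σ r) : IsSOSUpTo (C c * σ) r := by
  obtain ⟨m, p, hp, rfl⟩ := hσ
  refine ⟨m, fun i ↦ C √c * p i, fun i ↦ (natDegree_C_mul_le _ _).trans (hp i), ?_⟩
  simp only [mul_pow, ← C_pow, Real.sq_sqrt hc, Finset.mul_sum]

theorem isSOSUpTo_sq {p : ℝ[X]} (hp : p.natDegree ≤ r) : IsSOSUpTo (p ^ 2) r :=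
  ⟨1, fun _ ↦ p, fun _ ↦ hp, by simp⟩

theorem integral_Icc_eq_intervalIntegral {a b : ℝ} (hab : a ≤ b) (g : ℝ → ℝ) :
    ∫ x in Icc a b, g x = ∫ x in a..b, g x := by
  rw [intervalIntegral.integral_of_le hab, integral_Icc_eq_integral_Ioc]

/-- The values `∫ f σ` over all admissible densities `σ`, whose infimum is the Lasserre bound. -/
def lasserreValues (f : ℝ[X]) (r : ℕ) : Set ℝ :=
  {v | ∃ σ : ℝ[X], IsSOSUpTo σ r ∧ (∫ x in Icc (-1 : ℝ) 1, σ.eval x) = 1 ∧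
    v = ∫ x in Icc (-1 : ℝ) 1, f.eval x * σ.eval x}

theorem div_mem_lasserreValues (f : ℝ[X]) (hσ : IsSOSUpTo σ r)
    (hpos : 0 < ∫ x in (-1 : ℝ)..1, σ.eval x) :
    (∫ x in (-1 : ℝ)..1, f.eval x * σ.eval x) / (∫ x in (-1 : ℝ)..1, σ.eval x) ∈
      lasserreValues f r := by
  set I := ∫ x in (-1 : ℝ)..1, σ.eval x
  refine ⟨C I⁻¹ * σ, hσ.C_mul (inv_nonneg.2 hpos.le), ?_, ?_⟩
  · simp only [integral_Icc_eq_intervalIntegral (neg_le_self zero_le_one), eval_mul, eval_C,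
      intervalIntegral.integral_const_mul]
    exact inv_mul_cancel₀ hpos.ne'
  · simp only [integral_Icc_eq_intervalIntegral (neg_le_self zero_le_one), eval_mul, eval_C,
      mul_left_comm _ I⁻¹, intervalIntegral.integral_const_mul]
    exact div_eq_inv_mul _ _

theorem mem_lowerBounds_lasserreValues {c : ℝ} (h : ∀ σ : ℝ[X], IsSOSUpTo σ r →
    c * ∫ x in (-1 : ℝ)..1, σ.eval x ≤ ∫ x in (-1 : ℝ)..1, f.eval x * σ.eval x) :
    c ∈ lowerBounds (lasserreValues f r) := by
  rintro v ⟨σ, hσ, hmass, rfl⟩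
  have := h σ hσ
  rw [integral_Icc_eq_intervalIntegral (by norm_num)] at hmass ⊢
  rwa [hmass, mul_one] at this

theorem bddBelow_lasserreValues (f : ℝ[X]) (r : ℕ) : BddBelow (lasserreValues f r) := by
  obtain ⟨x₀, -, hmin⟩ := isCompact_Icc.exists_isMinOn
    (nonempty_Icc.2 (neg_le_self (zero_le_one (α := ℝ)))) f.continuousOn
  refine ⟨f.eval x₀, mem_lowerBounds_lasserreValues fun σ hσ ↦ ?_⟩
  rw [← intervalIntegral.integral_const_mul]
  exact intervalIntegral.integral_mono_on (by norm_num)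
    (Continuous.intervalIntegrable (by fun_prop) _ _)
    (Continuous.intervalIntegrable (by fun_prop) _ _)
    fun x hx ↦ mul_le_mul_of_nonneg_right (hmin hx) (hσ.eval_nonneg_s3 x)

theorem lasserreValues_nonempty (f : ℝ[X]) (r : ℕ) : (lasserreValues f r).Nonempty :=
  ⟨_, div_mem_lasserreValues f (isSOSUpTo_sq (p := 1) (by simp)) (by norm_num)⟩

theorem le_lasserreBound1 {c : ℝ} (h : ∀ σ : ℝ[X], IsSOSUpTo σ r →
    c * ∫ x in (-1 : ℝ)..1, σ.eval x ≤ ∫ x in (-1 : ℝ)..1, f.eval x * σ.eval x) :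
    c ≤ lasserreBound1 f r :=
  le_csInf (lasserreValues_nonempty f r) (mem_lowerBounds_lasserreValues h)

theorem lasserreBound1_le_div (f : ℝ[X]) (hσ : IsSOSUpTo σ r)
    (hpos : 0 < ∫ x in (-1 : ℝ)..1, σ.eval x) :
    lasserreBound1 f r ≤
      (∫ x in (-1 : ℝ)..1, f.eval x * σ.eval x) / ∫ x in (-1 : ℝ)..1, σ.eval x :=
  csInf_le (bddBelow_lasserreValues f r) (div_mem_lasserreValues f hσ hpos)

theorem integral_eval_X_mul_eval (σ : ℝ[X]) :
    ∫ x in (-1 : ℝ)..1, (X : ℝ[X]).eval x * σ.eval x =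
      (∫ x in (-1 : ℝ)..1, (x + 1) * σ.eval x) - ∫ x in (-1 : ℝ)..1, σ.eval x := by
  rw [← intervalIntegral.integral_sub (Continuous.intervalIntegrable (by fun_prop) _ _)
    (σ.continuous.intervalIntegrable _ _)]
  simp only [eval_X, add_mul, one_mul, add_sub_cancel_right]

theorem le_lasserreBound1_X (r : ℕ) : -1 + 1 / (4 * (2 * r + 1) ^ 2) ≤ lasserreBound1 X r := by
  refine le_lasserreBound1 fun σ hσ ↦ ?_
  have hmoment := le_integral_sub_left_mul (by norm_num : (-1 : ℝ) < 1) hσ.natDegree_le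
    fun x _ ↦ hσ.eval_nonneg_s3 x
  have hconst : ((1 : ℝ) - -1) / (8 * ((2 * r : ℕ) + 1) ^ 2) = 1 / (4 * (2 * r + 1) ^ 2) := by
    push_cast
    field_simp
    norm_num
  rw [hconst] at hmoment
  simp only [sub_neg_eq_add] at hmoment
  rw [integral_eval_X_mul_eval]
  linarith

theorem lasserreBound1_X_le {n : ℕ} (hn : 4 * n + 2 ≤ r) :
    lasserreBound1 X r ≤ -1 + 32 / (n + 1) ^ 2 := by
  have hdeg : (endpointKernel n ^ 2).natDegree ≤ r := by
    have := endpointKernel.natDegree_le n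
    rw [natDegree_pow]
    omega
  have hsos : IsSOSUpTo (endpointKernel n ^ 4) r := by
    simpa only [← pow_mul] using isSOSUpTo_sq hdeg
  have hpos : 0 < ∫ x in (-1 : ℝ)..1, (endpointKernel n ^ 4).eval x :=
    (by positivity : (0 : ℝ) < (n + 1) ^ 6 / 2).trans_le (endpointKernel.le_integral_pow_four n)
  refine (lasserreBound1_le_div X hsos hpos).trans ?_
  rw [div_le_iff₀ hpos, integral_eval_X_mul_eval]
  linarith [endpointKernel.integral_add_one_mul_pow_four_le_mul n]

end LasserreBound

/-- Theorem 2: for `f(x) = x` on `K = [-1,1]` (so `f_min = -1`),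
`f^(r) = -1 + Θ(1/r²)`. -/
theorem lasserre_bound_x_theta :
    ∃ c > (0 : ℝ), ∃ C > (0 : ℝ), ∃ r₀ : ℕ, ∀ r : ℕ, r₀ ≤ r →
      -1 + c / (r : ℝ) ^ 2 ≤ lasserreBound1 X r ∧
      lasserreBound1 X r ≤ -1 + C / (r : ℝ) ^ 2 := by
  refine ⟨1 / 36, by norm_num, 2048, by norm_num, 2, fun r hr ↦ ⟨?_, ?_⟩⟩
  · have hr' : (1 : ℝ) ≤ r := by exact_mod_cast (by omega : 1 ≤ r)
    calc -1 + 1 / 36 / (r : ℝ) ^ 2 = -1 + 1 / (4 * (2 * (r : ℝ) + r) ^ 2) := by ring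
      _ ≤ -1 + 1 / (4 * (2 * (r : ℝ) + 1) ^ 2) := by gcongr
      _ ≤ lasserreBound1 X r := le_lasserreBound1_X r
  · obtain ⟨n, hn, hrn⟩ : ∃ n : ℕ, 4 * n + 2 ≤ r ∧ r ≤ 8 * (n + 1) := ⟨(r - 2) / 4, by omega⟩
    have hr' : (r : ℝ) / 8 ≤ n + 1 := by
      have : (r : ℝ) ≤ 8 * (n + 1) := by exact_mod_cast hrn
      linarith
    have : (0 : ℝ) < r := by exact_mod_cast (by omega : 0 < r)
    calc lasserreBound1 X r ≤ -1 + 32 / (n + 1) ^ 2 := lasserreBound1_X_le hn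
      _ ≤ -1 + 32 / (r / 8) ^ 2 := by gcongr
      _ = -1 + 2048 / (r : ℝ) ^ 2 := by field_simp; norm_num
end
end

section
/- Let K ⊆ ℝⁿ be compact, connected, with positive Lebesgue measure, satisfying Assumption 1, and let f be a real polynomial that is nonconstant on K. Let λ_f be the push-forward by f of the Lebesgue measure λ restricted to K. Then there exist a constant C > 0 and r₀ ∈ ℕ such that for every r ≥ r₀, every nonzero real polynomial p of degree r + 1 that is orthogonal to all polynomials of degree at most r with respect to λ_f (i.e., ∫ p·q dλ_f = 0 for all q with deg q ≤ r) has a real root in the interval [f_min, f_min + C·(log r)²/r²]. -/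
open MeasureTheory Polynomial Set

noncomputable section

/-!
Let `μ = λ_f`, supported on `[m, M]` with `m = f_min`. Unless `p` vanishes `μ`-a.e. (and then
`p(m) = 0`, because `m` lies in the support of `μ`), a factorization `p = g h` with `g ≥ 0` on the
support and `deg g ≥ 1` would give `0 = ∫ p h = ∫ g h²`, hence `p = 0` a.e. So `p` has simple real
roots, all at least `m`, and Gauss quadrature at these roots shows that `∫ g ≥ 0` whenever
`deg g ≤ 2 r + 1` and `g` is nonnegative at the roots of `p`.

If there were no root in `[m, ξ]`, this would apply to `g = (t - ξ) q²` with `q` the Chebyshev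
polynomial of degree `r` of the interval `[ξ, M]`. But `|q| ≤ 1` on `[ξ, M]`, while `q` is of size
`exp (r √ε)` at distance `ε` to the left of `ξ`. For `ε` a large multiple of `(log r / r)²` this is
a power of `r` as high as we like, which outweighs the at most polynomial smallness in `ε` of
`μ [m, m + ε]`, and the integral of `g` is negative.
-/

section Orthogonality

/-- Orthogonality in `L²(μ)` to all polynomials of degree at most `r`. A polynomial `p` with
`p.natDegree = r + 1` and `OrthogonalUpTo μ r p` is an orthogonal polynomial of degree `r + 1`. -/
def OrthogonalUpTo (μ : Measure ℝ) (r : ℕ) (p : ℝ[X]) : Prop :=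
  ∀ q : ℝ[X], q.natDegree ≤ r → ∫ t, p.eval t * q.eval t ∂μ = 0

variable {μ : Measure ℝ} {r : ℕ} {p g : ℝ[X]}

lemma nonneg_or_nonpos_of_roots_eq_zero (hg : g.roots = 0) :
    (∀ t, 0 ≤ g.eval t) ∨ ∀ t, g.eval t ≤ 0 := by
  by_contra! ⟨⟨s, hs⟩, t, ht⟩
  obtain ⟨z, hz⟩ := mem_range_of_exists_le_of_exists_ge g.continuous ⟨s, hs.le⟩ ⟨t, ht.le⟩
  have hg0 : g ≠ 0 := by
    rintro rfl
    simp at hs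
  exact Multiset.notMem_zero z (hg ▸ (mem_roots hg0).2 hz)

lemma eval_eq_zero_of_mem_support {x : ℝ} (hx : x ∈ μ.support) (h : ∀ᵐ t ∂μ, p.eval t = 0) :
    p.eval x = 0 :=
  Measure.support_subset_of_isClosed (isClosed_eq p.continuous continuous_const) h hx

lemma integrable_eval_of_ae_mem_Icc [IsFiniteMeasure μ] {m M : ℝ}
    (hsupp : ∀ᵐ t ∂μ, t ∈ Icc m M) (p : ℝ[X]) : Integrable (fun t => p.eval t) μ := by
  have h : IntegrableOn (fun t => p.eval t) (Icc m M) μ :=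
    p.continuous.continuousOn.integrableOn_compact isCompact_Icc
  rwa [IntegrableOn, Measure.restrict_eq_self_of_ae_mem hsupp] at h

namespace OrthogonalUpTo

lemma integral_eval_eq_zero_of_dvd (hp : OrthogonalUpTo μ r p) (hpg : p ∣ g)
    (hg : g.natDegree ≤ p.natDegree + r) : ∫ t, g.eval t ∂μ = 0 := by
  obtain ⟨q, rfl⟩ := hpg
  simp_rw [eval_mul]
  rcases eq_or_ne p 0 with rfl | hp0
  · simp
  rcases eq_or_ne q 0 with rfl | hq0
  · simp
  rw [natDegree_mul hp0 hq0] at hg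
  exact hp q (by lia)

lemma ae_eval_eq_zero_of_nonneg_factor (hμ : ∀ q : ℝ[X], Integrable (fun t => q.eval t) μ)
    (hp : OrthogonalUpTo μ r p) (hdeg : p.natDegree ≤ r + 1) (hgp : g ∣ p)
    (hg : 0 < g.natDegree) (hg0 : ∀ᵐ t ∂μ, 0 ≤ g.eval t) : ∀ᵐ t ∂μ, p.eval t = 0 := by
  obtain ⟨h, rfl⟩ := hgp
  rcases eq_or_ne h 0 with rfl | hh
  · simp
  have hg_ne : g ≠ 0 := ne_zero_of_natDegree_gt hg
  rw [natDegree_mul hg_ne hh] at hdeg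
  have hint : ∫ t, (g * h * h).eval t ∂μ = 0 :=
    hp.integral_eval_eq_zero_of_dvd (dvd_mul_right _ _) <|
      natDegree_mul_le.trans (by lia)
  have hnonneg : ∀ᵐ t ∂μ, 0 ≤ (g * h * h).eval t := by
    filter_upwards [hg0] with t ht
    rw [mul_assoc, eval_mul, eval_mul]
    exact mul_nonneg ht (mul_self_nonneg _)
  filter_upwards [(integral_eq_zero_iff_of_nonneg_ae hnonneg (hμ _)).1 hint] with t ht
  rw [eval_mul] at ht
  rcases mul_eq_zero.1 ht with hgh | hh
  · exact hgh
  · rw [eval_mul, hh, mul_zero]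

variable (hμ : ∀ q : ℝ[X], Integrable (fun t => q.eval t) μ) (hp : OrthogonalUpTo μ r p)
  (hdeg : p.natDegree ≤ r + 1) (hne : ¬ ∀ᵐ t ∂μ, p.eval t = 0)
include hμ hp hdeg hne

lemma splits : p.Splits := by
  obtain ⟨q, hpq, hcard, hq⟩ := exists_prod_multiset_X_sub_C_mul p
  have hqp : q ∣ p := ⟨_, (mul_comm _ _).trans hpq |>.symm⟩
  suffices q.natDegree = 0 from splits_iff_card_roots.2 (by lia)
  by_contra hq0
  rcases nonneg_or_nonpos_of_roots_eq_zero hq with hpos | hneg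
  · exact hne <| hp.ae_eval_eq_zero_of_nonneg_factor hμ hdeg hqp (by lia) (.of_forall hpos)
  · refine hne <| hp.ae_eval_eq_zero_of_nonneg_factor hμ hdeg (neg_dvd.2 hqp)
      (by rw [natDegree_neg]; lia) (.of_forall fun t => ?_)
    rw [eval_neg]
    exact neg_nonneg.2 (hneg t)

lemma nodup_roots : p.roots.Nodup := by
  classical
  refine Multiset.nodup_iff_count_le_one.2 fun a => ?_
  by_contra! ha
  rw [count_roots] at ha
  have hdvd : (X - C a) ^ 2 ∣ p :=
    (pow_dvd_pow _ ha).trans (pow_rootMultiplicity_dvd p a)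
  refine hne <| hp.ae_eval_eq_zero_of_nonneg_factor hμ hdeg hdvd ?_ (.of_forall fun t => ?_)
  · rw [natDegree_pow, natDegree_X_sub_C]
    norm_num
  · rw [eval_pow]
    exact sq_nonneg _

lemma le_of_isRoot {m a : ℝ} (hm : ∀ᵐ t ∂μ, m ≤ t) (ha : p.IsRoot a) : m ≤ a := by
  by_contra! ham
  refine hne <| hp.ae_eval_eq_zero_of_nonneg_factor hμ hdeg (dvd_iff_isRoot.2 ha) ?_ ?_
  · rw [natDegree_X_sub_C]
    exact one_pos
  · filter_upwards [hm] with t ht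
    rw [eval_sub, eval_X, eval_C]
    linarith

end OrthogonalUpTo

lemma dvd_of_splits_of_nodup_roots (hs : p.Splits) (hn : p.roots.Nodup) (hp : p ≠ 0)
    (h : ∀ a ∈ p.roots, g.IsRoot a) : p ∣ g := by
  rcases eq_or_ne g 0 with rfl | hg
  · exact dvd_zero p
  · exact hs.dvd_of_roots_le_roots hp <|
      (Multiset.le_iff_subset hn).2 fun a ha => (mem_roots hg).2 (h a ha)

/-- The polynomial `∑ₐ g(a) ℓₐ²`, where `ℓₐ` is the Lagrange basis of the nodes `A`. It agrees with
`g` on `A`, and is nonnegative everywhere once `g` is nonnegative on `A`. -/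
def squareInterpolate (A : Finset ℝ) (g : ℝ[X]) : ℝ[X] :=
  ∑ a ∈ A, C (g.eval a) * Lagrange.basis A id a ^ 2

lemma natDegree_squareInterpolate_le (A : Finset ℝ) (g : ℝ[X]) :
    (squareInterpolate A g).natDegree ≤ 2 * (A.card - 1) := by
  refine natDegree_sum_le_of_forall_le _ _ fun a ha => (natDegree_C_mul_le _ _).trans ?_
  rw [natDegree_pow, Lagrange.natDegree_basis (injOn_id _) ha]

lemma eval_squareInterpolate {A : Finset ℝ} (g : ℝ[X]) {a : ℝ} (ha : a ∈ A) :
    (squareInterpolate A g).eval a = g.eval a := by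
  rw [squareInterpolate, eval_finsetSum, Finset.sum_eq_single_of_mem a ha]
  · have h1 : (Lagrange.basis A id a).eval a = 1 := Lagrange.eval_basis_self (injOn_id _) ha
    rw [eval_mul, eval_C, eval_pow, h1, one_pow, mul_one]
  · intro b _ hba
    have h0 : (Lagrange.basis A id b).eval a = 0 := Lagrange.eval_basis_of_ne (v := id) hba ha
    rw [eval_mul, eval_pow, h0, zero_pow two_ne_zero, mul_zero]

lemma eval_squareInterpolate_nonneg {A : Finset ℝ} (hg : ∀ a ∈ A, 0 ≤ g.eval a) (t : ℝ) :
    0 ≤ (squareInterpolate A g).eval t := by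
  rw [squareInterpolate, eval_finsetSum]
  refine Finset.sum_nonneg fun a ha => ?_
  rw [eval_mul, eval_C, eval_pow]
  exact mul_nonneg (hg a ha) (sq_nonneg _)

lemma OrthogonalUpTo.integral_eval_nonneg (hμ : ∀ q : ℝ[X], Integrable (fun t => q.eval t) μ)
    (hp : OrthogonalUpTo μ r p) (hdeg : p.natDegree = r + 1) (hs : p.Splits)
    (hn : p.roots.Nodup) (hg : g.natDegree ≤ 2 * r + 1) (hg0 : ∀ a ∈ p.roots, 0 ≤ g.eval a) :
    0 ≤ ∫ t, g.eval t ∂μ := by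
  classical
  set A := p.roots.toFinset with hA
  have hcard : A.card = r + 1 := by
    rw [hA, Multiset.toFinset_card_of_nodup hn, ← hs.natDegree_eq_card_roots, hdeg]
  set h := squareInterpolate A g
  have hdvd : p ∣ g - h := by
    refine dvd_of_splits_of_nodup_roots hs hn (ne_zero_of_natDegree_gt (n := r) (by lia)) ?_
    intro a ha
    rw [IsRoot, eval_sub, eval_squareInterpolate g (Multiset.mem_toFinset.2 ha), sub_self]
  have hsub : ∫ t, (g - h).eval t ∂μ = 0 := by
    refine hp.integral_eval_eq_zero_of_dvd hdvd ((natDegree_sub_le _ _).trans (max_le ?_ ?_))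
    · lia
    · exact (natDegree_squareInterpolate_le A g).trans (by lia)
  have hgh : ∫ t, g.eval t ∂μ = ∫ t, h.eval t ∂μ := by
    simp_rw [eval_sub] at hsub
    rwa [integral_sub (hμ g) (hμ h), sub_eq_zero] at hsub
  rw [hgh]
  exact integral_nonneg <|
    eval_squareInterpolate_nonneg fun a ha => hg0 a (Multiset.mem_toFinset.1 ha)

end Orthogonality

section Chebyshev

lemma sqrt_le_arcosh_one_add {δ : ℝ} (h0 : 0 ≤ δ) (h1 : δ ≤ 1) : √δ ≤ Real.arcosh (1 + δ) := by
  have hcosh : Real.cosh √δ ≤ 1 + δ := calc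
    Real.cosh √δ ≤ Real.exp (√δ ^ 2 / 2) := Real.cosh_le_exp_half_sq _
    _ = Real.exp (δ / 2) := by rw [Real.sq_sqrt h0]
    _ ≤ 1 / (1 - δ / 2) := Real.exp_bound_div_one_sub_of_interval (by linarith) (by linarith)
    _ ≤ 1 + δ := by
      rw [div_le_iff₀ (by linarith)]
      nlinarith
  rw [← Real.arcosh_cosh (Real.sqrt_nonneg δ)]
  exact (Real.arcosh_le_arcosh (Real.cosh_pos _) (by linarith)).2 hcosh

lemma exp_mul_sqrt_div_two_le_eval_T (r : ℕ) {δ y : ℝ} (h0 : 0 ≤ δ) (h1 : δ ≤ 1)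
    (hy : 1 + δ ≤ y) : Real.exp (r * √δ) / 2 ≤ (Chebyshev.T ℝ r).eval y := by
  have hθ : √δ ≤ Real.arcosh y := (sqrt_le_arcosh_one_add h0 h1).trans <|
    (Real.arcosh_le_arcosh (by linarith) (by linarith)).2 hy
  rw [← Real.cosh_arcosh (show 1 ≤ y by linarith), Chebyshev.T_real_cosh, Int.cast_natCast,
    Real.cosh_eq]
  have hexp : Real.exp (r * √δ) ≤ Real.exp (r * Real.arcosh y) := by gcongr
  linarith [Real.exp_pos (-(r * Real.arcosh y))]

/-- The Chebyshev polynomial of degree `r` of the interval `[a, b]`, precomposed with the affine map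
that sends `a` to `1` and `b` to `-1`, so that it is positive and increasing to the left of `a`. -/
def intervalChebyshev (a b : ℝ) (r : ℕ) : ℝ[X] :=
  (Chebyshev.T ℝ r).comp (1 + C (2 / (b - a)) * (C a - X))

variable {a b : ℝ}

lemma eval_intervalChebyshev (a b : ℝ) (r : ℕ) (t : ℝ) :
    (intervalChebyshev a b r).eval t =
      (Chebyshev.T ℝ r).eval (1 + 2 / (b - a) * (a - t)) := by
  simp [intervalChebyshev]

lemma natDegree_intervalChebyshev_le (a b : ℝ) (r : ℕ) :
    (intervalChebyshev a b r).natDegree ≤ r := by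
  have hlin : (1 + C (2 / (b - a)) * (C a - X) : ℝ[X]).natDegree ≤ 1 := by compute_degree
  refine natDegree_comp_le.trans ?_
  rw [Chebyshev.natDegree_T, Int.natAbs_natCast]
  exact (Nat.mul_le_mul_left r hlin).trans_eq (mul_one r)

lemma abs_eval_intervalChebyshev_le_one (hab : a < b) (r : ℕ) {t : ℝ} (ht : t ∈ Icc a b) :
    |(intervalChebyshev a b r).eval t| ≤ 1 := by
  have hba : 0 < b - a := sub_pos.2 hab
  have hlow : -2 ≤ 2 / (b - a) * (a - t) := by
    rw [div_mul_eq_mul_div, le_div_iff₀ hba]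
    linarith [ht.2]
  have hup : 2 / (b - a) * (a - t) ≤ 0 :=
    mul_nonpos_of_nonneg_of_nonpos (by positivity) (sub_nonpos.2 ht.1)
  rw [eval_intervalChebyshev]
  exact Chebyshev.abs_eval_T_real_le_one r (abs_le.2 ⟨by linarith, by linarith⟩)

lemma exp_mul_sqrt_div_two_le_eval_intervalChebyshev (hab : a < b) (r : ℕ) {δ t : ℝ}
    (h0 : 0 ≤ δ) (h1 : δ ≤ 1) (ht : t ≤ a - δ * (b - a) / 2) :
    Real.exp (r * √δ) / 2 ≤ (intervalChebyshev a b r).eval t := by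
  have hba : 0 < b - a := sub_pos.2 hab
  rw [eval_intervalChebyshev]
  refine exp_mul_sqrt_div_two_le_eval_T r h0 h1 (add_le_add_right ?_ 1)
  rw [div_mul_eq_mul_div, le_div_iff₀ hba]
  linarith

end Chebyshev

section RootGap

variable {μ : Measure ℝ} [IsFiniteMeasure μ] {m M : ℝ}

lemma sub_mul_sq_eval_intervalChebyshev_le (r : ℕ) {ε t : ℝ} (hε : 0 < ε) (hεM : ε < M - m)
    (ht : t ∈ Icc m M) :
    (t - (m + ε)) * (intervalChebyshev (m + ε) M r).eval t ^ 2 ≤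
      M - m - (Icc m (m + ε / 2)).indicator
        (fun _ => ε / 2 * (Real.exp (r * √(ε / (M - m))) / 2) ^ 2) t := by
  have hξM : m + ε < M := by linarith
  have hℓ : 0 < M - m := hε.trans hεM
  set y := (intervalChebyshev (m + ε) M r).eval t
  by_cases hnear : t ∈ Icc m (m + ε / 2)
  · have hδ : ε / (M - m) ≤ 1 := (div_le_one hℓ).2 hεM.le
    have hgap : ε / (M - m) * (M - (m + ε)) ≤ ε := calc
      ε / (M - m) * (M - (m + ε)) ≤ ε / (M - m) * (M - m) := by gcongr; linarith
      _ = ε := div_mul_cancel₀ ε hℓ.ne'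
    have hy : Real.exp (r * √(ε / (M - m))) / 2 ≤ y :=
      exp_mul_sqrt_div_two_le_eval_intervalChebyshev hξM r (by positivity) hδ
        (by linarith [hnear.2])
    have hdist : ε / 2 ≤ m + ε - t := by linarith [hnear.2]
    have hlarge : ε / 2 * (Real.exp (r * √(ε / (M - m))) / 2) ^ 2 ≤ (m + ε - t) * y ^ 2 := by
      gcongr
      linarith
    rw [indicator_of_mem hnear]
    linarith
  · rw [indicator_of_notMem hnear, sub_zero]
    rcases le_total t (m + ε) with hleft | hright
    · exact (mul_nonpos_of_nonpos_of_nonneg (sub_nonpos.2 hleft) (sq_nonneg y)).trans hℓ.le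
    · have hy : y ^ 2 ≤ 1 := (sq_le_one_iff_abs_le_one y).2 <|
        abs_eval_intervalChebyshev_le_one hξM r ⟨hright, ht.2⟩
      calc (t - (m + ε)) * y ^ 2 ≤ t - (m + ε) := mul_le_of_le_one_right (sub_nonneg.2 hright) hy
        _ ≤ M - m := by linarith [ht.2]

lemma integral_sub_mul_sq_eval_intervalChebyshev_le (hsupp : ∀ᵐ t ∂μ, t ∈ Icc m M) (r : ℕ) {ε : ℝ}
    (hε : 0 < ε) (hεM : ε < M - m) :
    ∫ t, ((X - C (m + ε)) * intervalChebyshev (m + ε) M r ^ 2).eval t ∂μ ≤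
      (M - m) * μ.real univ -
        ε / 2 * (Real.exp (r * √(ε / (M - m))) / 2) ^ 2 * μ.real (Icc m (m + ε / 2)) := by
  set w := ε / 2 * (Real.exp (r * √(ε / (M - m))) / 2) ^ 2
  have hind : Integrable ((Icc m (m + ε / 2)).indicator fun _ => w) μ :=
    (integrable_const w).indicator measurableSet_Icc
  calc ∫ t, ((X - C (m + ε)) * intervalChebyshev (m + ε) M r ^ 2).eval t ∂μ
      ≤ ∫ t, (M - m - (Icc m (m + ε / 2)).indicator (fun _ => w) t) ∂μ := by
        refine integral_mono_ae (integrable_eval_of_ae_mem_Icc hsupp _)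
          ((integrable_const _).sub hind) ?_
        filter_upwards [hsupp] with t ht
        simpa using sub_mul_sq_eval_intervalChebyshev_le r hε hεM ht
    _ = (M - m) * μ.real univ - w * μ.real (Icc m (m + ε / 2)) := by
        rw [integral_sub (integrable_const _) hind, integral_const,
          integral_indicator_const _ measurableSet_Icc, smul_eq_mul, smul_eq_mul, mul_comm,
          mul_comm w]

lemma OrthogonalUpTo.exists_isRoot_mem_Icc {r : ℕ} {p : ℝ[X]} (hp : OrthogonalUpTo μ r p)
    (hdeg : p.natDegree = r + 1) (hsupp : ∀ᵐ t ∂μ, t ∈ Icc m M) (hm : m ∈ μ.support) {ε : ℝ}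
    (hε : 0 < ε) (hεM : ε < M - m)
    (hmass : (M - m) * μ.real univ <
      ε / 2 * (Real.exp (r * √(ε / (M - m))) / 2) ^ 2 * μ.real (Icc m (m + ε / 2))) :
    ∃ t, p.IsRoot t ∧ t ∈ Icc m (m + ε) := by
  by_contra! hroot
  have hμ := integrable_eval_of_ae_mem_Icc hsupp
  have hne : ¬ ∀ᵐ t ∂μ, p.eval t = 0 := fun h =>
    hroot m (eval_eq_zero_of_mem_support hm h) ⟨le_rfl, by linarith⟩
  have hroots : ∀ a ∈ p.roots, m + ε < a := by
    intro a ha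
    have hma : m ≤ a :=
      hp.le_of_isRoot hμ hdeg.le hne (hsupp.mono fun _ ht => ht.1) (isRoot_of_mem_roots ha)
    exact not_le.1 fun h => hroot a (isRoot_of_mem_roots ha) ⟨hma, h⟩
  set q := intervalChebyshev (m + ε) M r
  have hgauss : 0 ≤ ∫ t, ((X - C (m + ε)) * q ^ 2).eval t ∂μ := by
    refine hp.integral_eval_nonneg hμ hdeg (hp.splits hμ hdeg.le hne)
      (hp.nodup_roots hμ hdeg.le hne) ?_ fun a ha => ?_
    · have hq : q.natDegree ≤ r := natDegree_intervalChebyshev_le _ _ r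
      refine natDegree_mul_le.trans ?_
      rw [natDegree_X_sub_C, natDegree_pow]
      lia
    · rw [eval_mul, eval_pow, eval_sub, eval_X, eval_C]
      exact mul_nonneg (sub_nonneg.2 (hroots a ha).le) (sq_nonneg _)
  linarith [integral_sub_mul_sq_eval_intervalChebyshev_le hsupp r hε hεM]

end RootGap

section Asymptotics

open Filter Topology

lemma tendsto_mul_log_sq_div_sq (C : ℝ) :
    Tendsto (fun r : ℕ => C * Real.log r ^ 2 / (r : ℝ) ^ 2) atTop (𝓝 0) := by
  have h : Tendsto (fun r : ℕ => Real.log r / r) atTop (𝓝 0) :=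
    Real.isLittleO_log_id_atTop.tendsto_div_nhds_zero.comp tendsto_natCast_atTop_atTop
  simpa [div_pow, mul_div_assoc] using (h.pow 2).const_mul C

lemma exp_mul_sqrt_mul_log_sq_div_sq {ℓ : ℝ} (hℓ : 0 < ℓ) (k : ℕ) {r : ℕ} (hr : 0 < r) :
    Real.exp (r * √(ℓ * k ^ 2 * Real.log r ^ 2 / (r : ℝ) ^ 2 / ℓ)) = (r : ℝ) ^ k := by
  have hr0 : (0 : ℝ) < r := by exact_mod_cast hr
  have hsq : ℓ * k ^ 2 * Real.log r ^ 2 / (r : ℝ) ^ 2 / ℓ = (k * Real.log r / r) ^ 2 := by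
    field_simp
  have harg : 0 ≤ k * Real.log r / r :=
    div_nonneg (mul_nonneg k.cast_nonneg (Real.log_natCast_nonneg r)) hr0.le
  rw [hsq, Real.sqrt_sq harg, mul_div_cancel₀ _ hr0.ne', Real.exp_nat_mul,
    Real.exp_log hr0]

lemma tendsto_mul_exp_mul_sqrt_sq_mul_pow_atTop {ℓ c : ℝ} (hℓ : 0 < ℓ) (hc : 0 < c) (N : ℕ) :
    Tendsto (fun r : ℕ =>
      let ε := ℓ * (N + 2 : ℕ) ^ 2 * Real.log r ^ 2 / (r : ℝ) ^ 2
      ε / 2 * (Real.exp (r * √(ε / ℓ)) / 2) ^ 2 * (c * (ε / 2) ^ N)) atTop atTop := by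
  have hcast : Tendsto (fun r : ℕ => (r : ℝ)) atTop atTop := tendsto_natCast_atTop_atTop
  set A := ℓ * (N + 2 : ℕ) ^ 2 / 2
  have hmain : Tendsto (fun r : ℕ => c / 4 * A ^ (N + 1) *
      ((Real.log r ^ 2) ^ (N + 1) * (r : ℝ) ^ 2)) atTop atTop := by
    have hlog : Tendsto (fun r : ℕ => Real.log r ^ 2) atTop atTop :=
      (tendsto_pow_atTop two_ne_zero).comp (Real.tendsto_log_atTop.comp hcast)
    refine Tendsto.const_mul_atTop (by positivity) (Tendsto.atTop_mul_atTop₀ ?_ ?_)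
    · exact (tendsto_pow_atTop N.succ_ne_zero).comp hlog
    · exact (tendsto_pow_atTop two_ne_zero).comp hcast
  refine hmain.congr' ?_
  filter_upwards [eventually_gt_atTop 0] with r hr
  have hr0 : (r : ℝ) ≠ 0 := by exact_mod_cast hr.ne'
  have hhalf : ℓ * (N + 2 : ℕ) ^ 2 * Real.log r ^ 2 / (r : ℝ) ^ 2 / 2 =
      A * Real.log r ^ 2 / (r : ℝ) ^ 2 := by ring
  dsimp only
  rw [exp_mul_sqrt_mul_log_sq_div_sq hℓ _ hr, hhalf, div_pow (A * Real.log r ^ 2),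
    mul_pow A]
  field_simp
  ring

end Asymptotics

lemma mem_support_of_pow_le_measureReal_Icc {μ : Measure ℝ} {m c s₀ : ℝ} {N : ℕ} (hc : 0 < c)
    (hs₀ : 0 < s₀) (hμ : ∀ s, 0 < s → s ≤ s₀ → c * s ^ N ≤ μ.real (Icc m (m + s))) :
    m ∈ μ.support := by
  refine Metric.nhds_basis_closedBall.mem_measureSupport.2 fun s hs => ?_
  have hmin : 0 < min s s₀ := lt_min hs hs₀
  have hpos : 0 < μ (Icc m (m + min s s₀)) := (ENNReal.toReal_pos_iff.1 <|
    (by positivity : 0 < c * min s s₀ ^ N).trans_le (hμ _ hmin (min_le_right s s₀))).1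
  refine hpos.trans_le (measure_mono ?_)
  rw [Real.closedBall_eq_Icc]
  exact Icc_subset_Icc (by linarith) (by linarith [min_le_left s s₀])

open Filter in
theorem exists_forall_isRoot_mem_Icc_of_pow_le_measureReal_Icc {μ : Measure ℝ} [IsFiniteMeasure μ]
    {m M c s₀ : ℝ} {N : ℕ} (hsupp : ∀ᵐ t ∂μ, t ∈ Icc m M) (hmM : m < M) (hc : 0 < c) (hs₀ : 0 < s₀)
    (hμ : ∀ s, 0 < s → s ≤ s₀ → c * s ^ N ≤ μ.real (Icc m (m + s))) :
    ∃ C > (0 : ℝ), ∃ r₀ : ℕ, ∀ r : ℕ, r₀ ≤ r → ∀ p : ℝ[X], p.natDegree = r + 1 →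
      OrthogonalUpTo μ r p →
        ∃ t, p.IsRoot t ∧ t ∈ Icc m (m + C * Real.log r ^ 2 / (r : ℝ) ^ 2) := by
  have hℓ : 0 < M - m := sub_pos.2 hmM
  set C := (M - m) * (N + 2 : ℕ) ^ 2
  have hsmall := (tendsto_mul_log_sq_div_sq C).eventually_lt_const (lt_min hℓ hs₀)
  have hlarge := (tendsto_mul_exp_mul_sqrt_sq_mul_pow_atTop hℓ hc N).eventually_gt_atTop
    ((M - m) * μ.real univ)
  obtain ⟨r₀, hr₀⟩ := eventually_atTop.1 ((eventually_ge_atTop 2).and (hsmall.and hlarge))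
  refine ⟨C, by positivity, r₀, fun r hr p hdeg hp => ?_⟩
  obtain ⟨hr2, hsmall, hlarge⟩ := hr₀ r hr
  obtain ⟨hεM, hεs⟩ := lt_min_iff.1 hsmall
  have hlog : 0 < Real.log r := Real.log_pos (by exact_mod_cast hr2)
  have hε : 0 < C * Real.log r ^ 2 / (r : ℝ) ^ 2 := by positivity
  refine hp.exists_isRoot_mem_Icc hdeg hsupp (mem_support_of_pow_le_measureReal_Icc hc hs₀ hμ)
    hε hεM (hlarge.trans_le ?_)
  exact mul_le_mul_of_nonneg_left (hμ _ (by positivity) (by linarith)) (by positivity)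

section MetricMeasureSpace

/-- Points of `K` are quantitatively dense in `K` for `ν`: small balls centred in `K` meet `K` in a
set of measure bounded below by a power of the radius. This is `Assumption1` for an arbitrary
measure; the exponent is a natural number, as increasing it only weakens the condition. -/
def HasPolynomialBallLowerBound {E : Type*} [PseudoMetricSpace E] [MeasurableSpace E]
    (ν : Measure E) (K : Set E) : Prop :=
  ∃ c > (0 : ℝ), ∃ δ₀ > (0 : ℝ), ∃ N : ℕ, ∀ x ∈ K, ∀ δ : ℝ, 0 < δ → δ ≤ δ₀ →
    c * δ ^ N ≤ ν.real (K ∩ Metric.closedBall x δ)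

lemma Assumption1.hasPolynomialBallLowerBound {n : ℕ} {K : Set (EuclideanSpace ℝ (Fin n))}
    (hK : Assumption1 K) (hfin : volume K ≠ ⊤) : HasPolynomialBallLowerBound volume K := by
  obtain ⟨ε, η, N, hε, hη, -, hball⟩ := hK
  set v := volume.real (Metric.ball (0 : EuclideanSpace ℝ (Fin n)) 1)
  have hv0 : 0 < v :=
    ENNReal.toReal_pos (Metric.measure_ball_pos _ _ one_pos).ne' measure_ball_lt_top.ne
  refine ⟨η * v, by positivity, min ε 1, by positivity, ⌈N⌉₊, fun x hx δ hδ hδ₀ => ?_⟩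
  obtain ⟨hδε, hδ1⟩ := le_min_iff.1 hδ₀
  have hreal : η * δ ^ N * v ≤ volume.real (K ∩ Metric.closedBall x δ) := by
    have h := ENNReal.toReal_mono (measure_ne_top_of_subset inter_subset_left hfin)
      (hball x hx δ hδ hδε)
    rwa [ENNReal.toReal_mul, ENNReal.toReal_ofReal (by positivity)] at h
  have hpow : δ ^ ⌈N⌉₊ ≤ δ ^ N := by
    rw [← Real.rpow_natCast]
    exact Real.rpow_le_rpow_of_exponent_ge hδ hδ1 (Nat.le_ceil N)
  calc η * v * δ ^ ⌈N⌉₊ ≤ η * v * δ ^ N := by gcongr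
    _ = η * δ ^ N * v := by ring
    _ ≤ volume.real (K ∩ Metric.closedBall x δ) := hreal

lemma inter_closedBall_subset_preimage_Icc {E : Type*} [PseudoMetricSpace E] {K : Set E}
    {F : E → ℝ} {L : NNReal} (hF : LipschitzOnWith L F K) {x : E} (hx : x ∈ K)
    (hmin : IsMinOn F K x) (δ : ℝ) :
    K ∩ Metric.closedBall x δ ⊆ F ⁻¹' Icc (F x) (F x + L * δ) := by
  rintro y ⟨hy, hyx⟩
  have hlip : |F y - F x| ≤ L * δ := calc
    |F y - F x| ≤ L * dist y x := hF.dist_le_mul y hy x hx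
    _ ≤ L * δ := by gcongr; exact hyx
  exact ⟨hmin hy, by linarith [le_abs_self (F y - F x)]⟩

variable {E : Type*} [MetricSpace E] [MeasurableSpace E] [OpensMeasurableSpace E]
  {ν : Measure E} {K : Set E} {F : E → ℝ} {L : NNReal}

lemma pow_le_measureReal_map_Icc (hK : IsCompact K) (hν : ν K ≠ ⊤) (hF : LipschitzOnWith L F K)
    (hball : HasPolynomialBallLowerBound ν K) {x : E} (hx : x ∈ K) (hmin : IsMinOn F K x) :
    ∃ c > (0 : ℝ), ∃ s₀ > (0 : ℝ), ∃ N : ℕ, ∀ s, 0 < s → s ≤ s₀ →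
      c * s ^ N ≤ ((ν.restrict K).map F).real (Icc (F x) (F x + s)) := by
  obtain ⟨c, hc, δ₀, hδ₀, N, hball⟩ := hball
  have hFm : AEMeasurable F (ν.restrict K) := hF.continuousOn.aemeasurable hK.measurableSet
  have hL : (0 : ℝ) < L + 1 := by positivity
  refine ⟨c / (L + 1) ^ N, by positivity, (L + 1) * δ₀, by positivity, N, fun s hs hs₀ => ?_⟩
  have hδ : 0 < s / (L + 1) := by positivity
  have hLδ : L * (s / (L + 1)) ≤ s := calc
    L * (s / (L + 1)) ≤ (L + 1) * (s / (L + 1)) := by gcongr; linarith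
    _ = s := mul_div_cancel₀ s hL.ne'
  have hsub : K ∩ Metric.closedBall x (s / (L + 1)) ⊆ F ⁻¹' Icc (F x) (F x + s) ∩ K :=
    fun y hy => ⟨preimage_mono (Icc_subset_Icc_right (by gcongr))
      (inter_closedBall_subset_preimage_Icc hF hx hmin _ hy), hy.1⟩
  calc c / (L + 1) ^ N * s ^ N = c * (s / (L + 1)) ^ N := by rw [div_pow]; ring
    _ ≤ ν.real (K ∩ Metric.closedBall x (s / (L + 1))) :=
      hball x hx _ hδ ((div_le_iff₀' hL).2 hs₀)
    _ ≤ ν.real (F ⁻¹' Icc (F x) (F x + s) ∩ K) :=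
      measureReal_mono hsub (measure_ne_top_of_subset inter_subset_right hν)
    _ = ((ν.restrict K).map F).real (Icc (F x) (F x + s)) := by
      rw [measureReal_def, measureReal_def, Measure.map_apply_of_aemeasurable hFm measurableSet_Icc,
        Measure.restrict_apply' hK.measurableSet]

theorem orthogonal_polynomial_smallest_root_general (hK : IsCompact K) (hne : K.Nonempty)
    (hν : ν K ≠ ⊤) (hball : HasPolynomialBallLowerBound ν K) (hF : LipschitzOnWith L F K) :
    ∃ C > (0 : ℝ), ∃ r₀ : ℕ, ∀ r : ℕ, r₀ ≤ r → ∀ p : ℝ[X], p.natDegree = r + 1 →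
      OrthogonalUpTo ((ν.restrict K).map F) r p →
        ∃ t : ℝ, p.IsRoot t ∧
          t ∈ Icc (sInf (F '' K)) (sInf (F '' K) + C * Real.log r ^ 2 / (r : ℝ) ^ 2) := by
  obtain ⟨x, hx, hmin⟩ := hK.exists_isMinOn hne hF.continuousOn
  obtain ⟨y, -, hmax⟩ := hK.exists_isMaxOn hne hF.continuousOn
  have hinf : sInf (F '' K) = F x :=
    IsLeast.csInf_eq ⟨mem_image_of_mem F hx, forall_mem_image.2 hmin⟩
  have hFm : AEMeasurable F (ν.restrict K) := hF.continuousOn.aemeasurable hK.measurableSet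
  have : IsFiniteMeasure (ν.restrict K) := isFiniteMeasure_restrict.2 hν
  have hsupp : ∀ᵐ t ∂(ν.restrict K).map F, t ∈ Icc (F x) (F y + 1) := by
    refine (ae_map_iff hFm measurableSet_Icc).2 ?_
    filter_upwards [ae_restrict_mem hK.measurableSet] with z hz
    exact ⟨hmin hz, (hmax hz).trans (by linarith)⟩
  obtain ⟨c, hc, s₀, hs₀, N, hmass⟩ := pow_le_measureReal_map_Icc hK hν hF hball hx hmin
  rw [hinf]
  exact exists_forall_isRoot_mem_Icc_of_pow_le_measureReal_Icc hsupp
    (lt_add_of_le_of_pos (hmax hx) one_pos) hc hs₀ hmass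

end MetricMeasureSpace

lemma exists_lipschitzOnWith_eval {ι : Type*} [Fintype ι] {K : Set (EuclideanSpace ℝ ι)}
    (hK : IsCompact K) (f : MvPolynomial ι ℝ) :
    ∃ L, LipschitzOnWith L (fun x => MvPolynomial.eval (fun i => x i) f) K := by
  have heval : ContDiff ℝ 1 fun x : ι → ℝ => MvPolynomial.eval x f :=
    contDiffOn_univ.1 ((AnalyticOnNhd.eval_mvPolynomial f).contDiffOn uniqueDiffOn_univ)
  have hdiff : ContDiff ℝ 1 fun x : EuclideanSpace ℝ ι => MvPolynomial.eval (fun i => x i) f :=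
    heval.comp (by fun_prop : ContDiff ℝ 1 fun (x : EuclideanSpace ℝ ι) i => x i)
  exact hdiff.locallyLipschitz.locallyLipschitzOn.exists_lipschitzOnWith_of_compact hK

/-- Consequence for orthogonal polynomials of the push-forward measure `λ_f`:
every orthogonal polynomial of degree `r+1` with respect to `λ_f` has a root in
`[f_min, f_min + C log² r / r²]`. -/
theorem orthogonal_polynomial_smallest_root {n : ℕ}
    (K : Set (EuclideanSpace ℝ (Fin n)))
    (hKc : IsCompact K) (hKconn : IsConnected K) (hKpos : 0 < volume K)
    (hK1 : Assumption1 K) (f : MvPolynomial (Fin n) ℝ)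
    (hnonconst : ∃ x ∈ K, ∃ y ∈ K,
      MvPolynomial.eval (fun i => x i) f ≠ MvPolynomial.eval (fun i => y i) f) :
    ∃ C > (0 : ℝ), ∃ r₀ : ℕ, ∀ r : ℕ, r₀ ≤ r →
      ∀ p : Polynomial ℝ, p ≠ 0 → p.natDegree = r + 1 →
        (∀ q : Polynomial ℝ, q.natDegree ≤ r →
          (∫ t, p.eval t * q.eval t
            ∂(Measure.map (fun x => MvPolynomial.eval (fun i => x i) f)
              (volume.restrict K))) = 0) →
        ∃ t : ℝ, p.IsRoot t ∧
          t ∈ Icc (sInf ((fun x => MvPolynomial.eval (fun i => x i) f) '' K))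
            (sInf ((fun x => MvPolynomial.eval (fun i => x i) f) '' K) +
              C * (Real.log r) ^ 2 / (r : ℝ) ^ 2) := by
  obtain ⟨L, hf⟩ := exists_lipschitzOnWith_eval hKc f
  obtain ⟨C, hC, r₀, h⟩ := orthogonal_polynomial_smallest_root_general hKc hKconn.nonempty
    hKc.measure_ne_top (hK1.hasPolynomialBallLowerBound hKc.measure_ne_top) hf
  exact ⟨C, hC, r₀, fun r hr p _ => h r hr p⟩
end
end
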